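/- Let μ be the standard Gaussian measure on ℝⁿ, let Ω = {x ∈ ℝⁿ : g_j(x) ≥ 0, j = 1,…,m}, and assume both Ω and ℝⁿ ∖ Ω have nonempty interior. Let f ∈ ℝ[x] be a polynomial vanishing on ∂Ω and let ω̄_d be the value of the Stokes-augmented semidefinite program with objective u_0. Then for every d ≥ d₀ the program defining ω̄_d attains its optimum and equals its semidefinite dual value; the sequence (ω̄_d)_{d ≥ d₀} is monotone non-increasing, satisfies μ(Ω) ≤ ω̄_d ≤ ō_d(1) for all d ≥ d₀, and converges to μ(Ω) as d → ∞. -/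

import Mathlib

open MeasureTheory MvPolynomial Filter Topology

noncomputable def gaussianMeasure (n : ℕ) : Measure (Fin n → ℝ) :=
  volume.withDensity fun x =>
    ENNReal.ofReal ((2 * Real.pi) ^ (-(n : ℝ) / 2) * Real.exp (-(∑ i, x i ^ 2) / 2))

noncomputable def expMeasure (n : ℕ) : Measure (Fin n → ℝ) :=
  (volume.restrict {x : Fin n → ℝ | ∀ i, 0 ≤ x i}).withDensity fun x =>
    ENNReal.ofReal (Real.exp (-(∑ i, x i)))

/-- degree |α| of a multi-index -/
def fdeg {n : ℕ} (α : Fin n →₀ ℕ) : ℕ := α.sum fun _ e => e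

/-- Riesz functional `L_u(p)` of a (pseudo-)moment sequence `u`. -/
noncomputable def riesz {n : ℕ} (u : (Fin n →₀ ℕ) → ℝ) (p : MvPolynomial (Fin n) ℝ) : ℝ :=
  ∑ α ∈ p.support, p.coeff α * u α

/-- Positive semidefiniteness of the moment matrix `M_d(u)`, expressed via its
quadratic form: `L_u(p²) ≥ 0` for all polynomials of degree at most `d`. -/
def MomPSD {n : ℕ} (d : ℕ) (u : (Fin n →₀ ℕ) → ℝ) : Prop :=
  ∀ p : MvPolynomial (Fin n) ℝ, p.totalDegree ≤ d → 0 ≤ riesz u (p ^ 2)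

/-- Positive semidefiniteness of the localizing matrix `M_k(g u)`, expressed via its
quadratic form: `L_u(g·p²) ≥ 0` for all polynomials of degree at most `k`. -/
def LocPSD {n : ℕ} (k : ℕ) (g : MvPolynomial (Fin n) ℝ) (u : (Fin n →₀ ℕ) → ℝ) : Prop :=
  ∀ p : MvPolynomial (Fin n) ℝ, p.totalDegree ≤ k → 0 ≤ riesz u (g * p ^ 2)

/-- moments of the standard Gaussian measure -/
noncomputable def gmom (n : ℕ) (α : Fin n →₀ ℕ) : ℝ :=
  ∫ x, (∏ i, x i ^ α i) ∂gaussianMeasure n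

/-- `d_j = ⌈deg g / 2⌉` -/
def dHalf {n : ℕ} (g : MvPolynomial (Fin n) ℝ) : ℕ := (g.totalDegree + 1) / 2

/-- the basic closed semi-algebraic set determined by the polynomials `g_j` -/
def semialg {n m : ℕ} (g : Fin m → MvPolynomial (Fin n) ℝ) : Set (Fin n → ℝ) :=
  {x | ∀ j, 0 ≤ eval x (g j)}

/-- feasibility for the primal semidefinite relaxation of order `d` (Gaussian measure) -/
def Feasible {n m : ℕ} (g : Fin m → MvPolynomial (Fin n) ℝ) (d : ℕ)
    (u v : (Fin n →₀ ℕ) → ℝ) : Prop :=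
  (∀ α : Fin n →₀ ℕ, fdeg α ≤ 2 * d → u α + v α = gmom n α) ∧
  MomPSD d u ∧ MomPSD d v ∧ ∀ j, LocPSD (d - dHalf (g j)) (g j) u

/-- the value `ō_d(f)` of the primal semidefinite relaxation of order `d` -/
noncomputable def obar {n m : ℕ} (g : Fin m → MvPolynomial (Fin n) ℝ) (d : ℕ)
    (f : MvPolynomial (Fin n) ℝ) : ℝ :=
  sSup {r | ∃ u v, Feasible g d u v ∧ r = riesz u f}

/-- the Stokes polynomial `p_{i,α} = ∂(x^α f)/∂x_i − x_i · x^α f` (Gaussian case) -/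
noncomputable def pStokesG {n : ℕ} (f : MvPolynomial (Fin n) ℝ) (i : Fin n) (α : Fin n →₀ ℕ) :
    MvPolynomial (Fin n) ℝ :=
  pderiv i (monomial α 1 * f) - X i * (monomial α 1 * f)

/-- the Stokes polynomial `p_{i,α} = ∂(x^α f)/∂x_i − x^α f` (exponential case) -/
noncomputable def pStokesE {n : ℕ} (f : MvPolynomial (Fin n) ℝ) (i : Fin n) (α : Fin n →₀ ℕ) :
    MvPolynomial (Fin n) ℝ :=
  pderiv i (monomial α 1 * f) - monomial α 1 * f

/-- feasibility for the Stokes-augmented semidefinite relaxation of order `d` -/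
def FeasibleS {n m : ℕ} (g : Fin m → MvPolynomial (Fin n) ℝ) (f : MvPolynomial (Fin n) ℝ)
    (d : ℕ) (u v : (Fin n →₀ ℕ) → ℝ) : Prop :=
  Feasible g d u v ∧
  ∀ (i : Fin n) (α : Fin n →₀ ℕ), (pStokesG f i α).totalDegree ≤ 2 * d →
    riesz u (pStokesG f i α) = 0

/-- the value `ω̄_d` of the Stokes-augmented semidefinite relaxation of order `d` -/
noncomputable def omegabar {n m : ℕ} (g : Fin m → MvPolynomial (Fin n) ℝ)
    (f : MvPolynomial (Fin n) ℝ) (d : ℕ) : ℝ :=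
  sSup {r | ∃ u v, FeasibleS g f d u v ∧ r = u 0}

/-- `p ∈ Σ[x]_d`: `p` is a sum of squares of polynomials of degree at most `d` -/
def IsSOS {n : ℕ} (d : ℕ) (p : MvPolynomial (Fin n) ℝ) : Prop :=
  ∃ (k : ℕ) (q : Fin k → MvPolynomial (Fin n) ℝ),
    (∀ i, (q i).totalDegree ≤ d) ∧ p = ∑ i, q i ^ 2

/-- membership in the truncated quadratic module `Q_{2d}(Ω)` -/
def InQM {n m : ℕ} (g : Fin m → MvPolynomial (Fin n) ℝ) (d : ℕ)
    (p : MvPolynomial (Fin n) ℝ) : Prop :=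
  ∃ (σ₀ : MvPolynomial (Fin n) ℝ) (σ : Fin m → MvPolynomial (Fin n) ℝ),
    IsSOS d σ₀ ∧ (∀ j, IsSOS (d - dHalf (g j)) (σ j)) ∧ p = σ₀ + ∑ j, σ j * g j



/-- Hahn-Banach in the form of an attained conic duality. -/
theorem conic_duality {E : Type*} [AddCommGroup E] [Module ℝ E] (P T : Set E) (e : E)
    (I : E →ₗ[ℝ] ℝ)
    (hP0 : (0 : E) ∈ P) (hPadd : ∀ a ∈ P, ∀ b ∈ P, a + b ∈ P)
    (hPsmul : ∀ c : ℝ, 0 < c → ∀ a ∈ P, c • a ∈ P)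
    (hT0 : (0 : E) ∈ T) (hTadd : ∀ a ∈ T, ∀ b ∈ T, a + b ∈ T)
    (hTsmul : ∀ c : ℝ, 0 < c → ∀ a ∈ T, c • a ∈ T)
    (hI : ∀ a ∈ P, 0 ≤ I a) (hdec : ∀ h : E, ∃ p ∈ P, p - h ∈ T) :
    ∃ L : E →ₗ[ℝ] ℝ, (∀ p ∈ P, L p ≤ I p) ∧ (∀ t ∈ T, 0 ≤ L t) ∧
      L e = sInf {r : ℝ | ∃ p ∈ P, p - e ∈ T ∧ r = I p} := by
  set S : E → Set ℝ := fun h => {r : ℝ | ∃ p ∈ P, p - h ∈ T ∧ r = I p} with hS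
  set N : E → ℝ := fun h => sInf (S h) with hN
  have hbdd : ∀ h, BddBelow (S h) := by
    intro h
    refine ⟨0, ?_⟩
    rintro r ⟨p, hp, -, rfl⟩
    exact hI p hp
  have hne : ∀ h, (S h).Nonempty := by
    intro h
    obtain ⟨p, hp, hpt⟩ := hdec h
    exact ⟨_, p, hp, hpt, rfl⟩
  have hNle : ∀ h, ∀ p ∈ P, p - h ∈ T → N h ≤ I p := fun h p hp hpt =>
    csInf_le (hbdd h) ⟨p, hp, hpt, rfl⟩
  have hN0 : ∀ h, 0 ≤ N h := by
    intro h
    refine le_csInf (hne h) ?_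
    rintro r ⟨p, hp, -, rfl⟩
    exact hI p hp
  have hle : ∀ c : ℝ, 0 < c → ∀ x, N (c • x) ≤ c * N x := by
    intro c hc x
    have : c⁻¹ * N (c • x) ≤ N x := by
      refine le_csInf (hne x) ?_
      rintro r ⟨p, hp, hpt, rfl⟩
      rw [inv_mul_le_iff₀ hc]
      have := hNle (c • x) (c • p) (hPsmul c hc p hp)
        (by rw [← smul_sub]; exact hTsmul c hc _ hpt)
      simpa using this
    rwa [inv_mul_le_iff₀ hc] at this
  have hhom : ∀ c : ℝ, 0 < c → ∀ x, N (c • x) = c * N x := by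
    intro c hc x
    refine le_antisymm (hle c hc x) ?_
    have := hle c⁻¹ (inv_pos.2 hc) (c • x)
    rw [smul_smul, inv_mul_cancel₀ hc.ne', one_smul, ← div_eq_inv_mul, le_div_iff₀ hc] at this
    linarith
  have hadd : ∀ x y, N (x + y) ≤ N x + N y := by
    intro x y
    have : N (x + y) - N y ≤ N x := by
      refine le_csInf (hne x) ?_
      rintro r ⟨p, hp, hpt, rfl⟩
      have : N (x + y) - I p ≤ N y := by
        refine le_csInf (hne y) ?_
        rintro r ⟨q, hq, hqt, rfl⟩
        have := hNle (x + y) (p + q) (hPadd p hp q hq)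
          (by have := hTadd _ hpt _ hqt; rwa [sub_add_sub_comm] at this)
        rw [map_add] at this
        linarith
      linarith
    linarith
  have hNzero : N 0 = 0 := by
    refine le_antisymm ?_ (hN0 0)
    have := hNle 0 0 hP0 (by simpa using hT0)
    simpa using this
  have key : ∃ L : E →ₗ[ℝ] ℝ, (∀ x, L x ≤ N x) ∧ L e = N e := by
    by_cases he : e = 0
    · obtain ⟨L, -, hL⟩ := exists_extension_of_le_sublinear (⊥ : E →ₗ.[ℝ] ℝ) N hhom hadd (by
        rintro ⟨x, hx⟩
        have hx0 : x = 0 := (Submodule.mem_bot ℝ).1 hx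
        subst hx0
        rw [hNzero]
        exact (LinearPMap.map_zero _).le)
      exact ⟨L, hL, by rw [he, hNzero, map_zero]⟩
    · obtain ⟨L, hL1, hL⟩ := exists_extension_of_le_sublinear
        (LinearPMap.mkSpanSingleton e (N e) he) N hhom hadd (by
        rintro ⟨x, hx⟩
        have hx' : x ∈ Submodule.span ℝ {e} := hx
        obtain ⟨c, rfl⟩ := Submodule.mem_span_singleton.1 hx'
        rw [LinearPMap.mkSpanSingleton'_apply]
        rcases lt_trichotomy c 0 with hc | hc | hc
        · exact (mul_nonpos_of_nonpos_of_nonneg hc.le (hN0 _)).trans (hN0 _)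
        · subst hc; simp [hNzero]
        · exact (hhom c hc e).ge)
      refine ⟨L, hL, ?_⟩
      have := hL1 ⟨e, Submodule.mem_span_singleton_self e⟩
      rw [LinearPMap.mkSpanSingleton_apply] at this
      exact this
  obtain ⟨L, hL, hLe⟩ := key
  refine ⟨L, fun p hp => (hL p).trans (hNle p p hp (by simpa using hT0)), fun t ht => ?_, hLe⟩
  have := (hL (-t)).trans (hNle (-t) 0 hP0 (by simpa using ht))
  simpa using this

/-- The Riesz functional as a linear map. -/
noncomputable def rieszL {n : ℕ} (u : (Fin n →₀ ℕ) → ℝ) : MvPolynomial (Fin n) ℝ →ₗ[ℝ] ℝ :=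
  (MvPolynomial.basisMonomials (Fin n) ℝ).constr ℝ u

theorem rieszL_monomial {n : ℕ} (u : (Fin n →₀ ℕ) → ℝ) (α : Fin n →₀ ℕ) :
    rieszL u (monomial α 1) = u α := by
  have := (MvPolynomial.basisMonomials (Fin n) ℝ).constr_basis ℝ u α
  simpa [rieszL] using this

theorem linear_eq_sum {n : ℕ} (L : MvPolynomial (Fin n) ℝ →ₗ[ℝ] ℝ)
    (p : MvPolynomial (Fin n) ℝ) :
    L p = ∑ α ∈ p.support, p.coeff α * L (monomial α 1) := by
  conv_lhs => rw [p.as_sum]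
  rw [map_sum]
  refine Finset.sum_congr rfl fun α _ => ?_
  rw [← smul_eq_mul, ← map_smul, smul_monomial, smul_eq_mul, mul_one]

theorem riesz_linear {n : ℕ} (L : MvPolynomial (Fin n) ℝ →ₗ[ℝ] ℝ)
    (p : MvPolynomial (Fin n) ℝ) : riesz (fun α => L (monomial α 1)) p = L p :=
  (linear_eq_sum L p).symm

theorem riesz_eq {n : ℕ} (u : (Fin n →₀ ℕ) → ℝ) (p : MvPolynomial (Fin n) ℝ) :
    riesz u p = rieszL u p := by
  rw [linear_eq_sum (rieszL u)]
  simp only [rieszL_monomial]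
  rfl

theorem riesz_one {n : ℕ} (u : (Fin n →₀ ℕ) → ℝ) : riesz u 1 = u 0 := by
  rw [riesz_eq]; exact rieszL_monomial u 0

theorem fdeg_le_of_mem {n : ℕ} {p : MvPolynomial (Fin n) ℝ} {α : Fin n →₀ ℕ}
    (h : α ∈ p.support) : fdeg α ≤ p.totalDegree := le_totalDegree h

theorem fdeg_add {n : ℕ} (a b : Fin n →₀ ℕ) : fdeg (a + b) = fdeg a + fdeg b :=
  Finsupp.sum_add_index' (fun _ => rfl) (fun _ _ _ => rfl)

theorem fdeg_split {n : ℕ} (d : ℕ) (α : Fin n →₀ ℕ) (h : fdeg α ≤ 2 * d) :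
    ∃ b c : Fin n →₀ ℕ, α = b + c ∧ fdeg b ≤ d ∧ fdeg c ≤ d := by
  have key : ∀ k, k ≤ fdeg α → ∃ b c : Fin n →₀ ℕ, α = b + c ∧ fdeg b = k := by
    intro k
    induction k with
    | zero => intro _; exact ⟨0, α, by simp, by simp [fdeg]⟩
    | succ k ih =>
      intro hk
      obtain ⟨b, c, hbc, hb⟩ := ih (by omega)
      have hc : c ≠ 0 := by
        rintro rfl
        rw [hbc, add_zero, hb] at hk
        omega
      obtain ⟨i, hi⟩ := Finsupp.ne_iff.1 hc
      have hi' : 1 ≤ c i := Nat.one_le_iff_ne_zero.2 hi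
      refine ⟨b + Finsupp.single i 1, c - Finsupp.single i 1, ?_, ?_⟩
      · rw [hbc, add_assoc, add_tsub_cancel_of_le]
        simpa using hi'
      · rw [fdeg_add, hb]
        simp [fdeg]
  by_cases hd : fdeg α ≤ d
  · exact ⟨α, 0, by simp, hd, by simp [fdeg]⟩
  · obtain ⟨b, c, hbc, hb⟩ := key d (by omega)
    refine ⟨b, c, hbc, hb.le, ?_⟩
    have := fdeg_add b c
    rw [← hbc] at this
    omega

theorem IsSOS.zero {n : ℕ} (d : ℕ) : IsSOS d (0 : MvPolynomial (Fin n) ℝ) :=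
  ⟨0, fun _ => 0, fun i => i.elim0, by simp⟩

theorem IsSOS.sq {n : ℕ} {d : ℕ} {p : MvPolynomial (Fin n) ℝ} (hp : p.totalDegree ≤ d) :
    IsSOS d (p ^ 2) := ⟨1, fun _ => p, fun _ => hp, by simp⟩

theorem IsSOS.add {n : ℕ} {d : ℕ} {p q : MvPolynomial (Fin n) ℝ} (hp : IsSOS d p)
    (hq : IsSOS d q) : IsSOS d (p + q) := by
  obtain ⟨k, a, ha, rfl⟩ := hp
  obtain ⟨l, b, hb, rfl⟩ := hq
  refine ⟨k + l, Fin.append a b, ?_, ?_⟩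
  · intro i
    refine Fin.addCases (fun i => ?_) (fun i => ?_) i
    · simpa using ha i
    · simpa using hb i
  · rw [Fin.sum_univ_add]
    simp

theorem IsSOS.smul {n : ℕ} {d : ℕ} {p : MvPolynomial (Fin n) ℝ} {c : ℝ} (hc : 0 ≤ c)
    (hp : IsSOS d p) : IsSOS d (c • p) := by
  obtain ⟨k, a, ha, rfl⟩ := hp
  refine ⟨k, fun i => Real.sqrt c • a i, fun i => (totalDegree_smul_le _ _).trans (ha i), ?_⟩
  rw [Finset.smul_sum]
  refine Finset.sum_congr rfl fun i _ => ?_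
  rw [smul_pow, Real.sq_sqrt hc]

theorem IsSOS.mono {n : ℕ} {d e : ℕ} (h : d ≤ e) {p : MvPolynomial (Fin n) ℝ}
    (hp : IsSOS d p) : IsSOS e p := by
  obtain ⟨k, a, ha, rfl⟩ := hp
  exact ⟨k, a, fun i => (ha i).trans h, rfl⟩

theorem sq_degree {n : ℕ} {d : ℕ} {p : MvPolynomial (Fin n) ℝ} (hp : p.totalDegree ≤ d) :
    (p ^ 2).totalDegree ≤ 2 * d :=
  (totalDegree_pow _ _).trans (Nat.mul_le_mul_left 2 hp)

theorem IsSOS.degree {n : ℕ} {d : ℕ} {p : MvPolynomial (Fin n) ℝ}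
    (hp : IsSOS d p) : p.totalDegree ≤ 2 * d := by
  obtain ⟨k, a, ha, rfl⟩ := hp
  exact totalDegree_finsetSum_le fun i _ => sq_degree (ha i)

theorem IsSOS.nonneg_mul {n : ℕ} {d : ℕ} {p : MvPolynomial (Fin n) ℝ}
    (hp : IsSOS d p) (L : MvPolynomial (Fin n) ℝ →ₗ[ℝ] ℝ) (g : MvPolynomial (Fin n) ℝ)
    (hL : ∀ q : MvPolynomial (Fin n) ℝ, q.totalDegree ≤ d → 0 ≤ L (g * q ^ 2)) :
    0 ≤ L (p * g) := by
  obtain ⟨k, a, ha, rfl⟩ := hp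
  rw [Finset.sum_mul, map_sum]
  exact Finset.sum_nonneg fun i _ => by rw [mul_comm]; exact hL _ (ha i)

theorem IsSOS.nonneg {n : ℕ} {d : ℕ} {p : MvPolynomial (Fin n) ℝ}
    (hp : IsSOS d p) (L : MvPolynomial (Fin n) ℝ →ₗ[ℝ] ℝ)
    (hL : ∀ q : MvPolynomial (Fin n) ℝ, q.totalDegree ≤ d → 0 ≤ L (q ^ 2)) :
    0 ≤ L p := by
  simpa using hp.nonneg_mul L 1 (by simpa using hL)

theorem InQM.zero {n m : ℕ} (g : Fin m → MvPolynomial (Fin n) ℝ) (d : ℕ) : InQM g d 0 :=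
  ⟨0, fun _ => 0, IsSOS.zero _, fun _ => IsSOS.zero _, by simp⟩

theorem InQM.of_sos {n m : ℕ} (g : Fin m → MvPolynomial (Fin n) ℝ) {d : ℕ}
    {p : MvPolynomial (Fin n) ℝ} (hp : IsSOS d p) : InQM g d p :=
  ⟨p, fun _ => 0, hp, fun _ => IsSOS.zero _, by simp⟩

theorem InQM.of_loc {n m : ℕ} (g : Fin m → MvPolynomial (Fin n) ℝ) {d : ℕ} (j : Fin m)
    {p : MvPolynomial (Fin n) ℝ} (hp : p.totalDegree ≤ d - dHalf (g j)) :
    InQM g d (g j * p ^ 2) := by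
  classical
  refine ⟨0, fun i => if i = j then p ^ 2 else 0, IsSOS.zero _, fun i => ?_, ?_⟩
  · dsimp only
    split_ifs with h
    · subst h; exact IsSOS.sq hp
    · exact IsSOS.zero _
  · simp [mul_comm]

theorem InQM.add {n m : ℕ} {g : Fin m → MvPolynomial (Fin n) ℝ} {d : ℕ}
    {p q : MvPolynomial (Fin n) ℝ} (hp : InQM g d p) (hq : InQM g d q) : InQM g d (p + q) := by
  obtain ⟨a, s, ha, hs, rfl⟩ := hp
  obtain ⟨b, t, hb, ht, rfl⟩ := hq
  refine ⟨a + b, fun j => s j + t j, ha.add hb, fun j => (hs j).add (ht j), ?_⟩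
  simp only [add_mul, Finset.sum_add_distrib]
  ring

theorem InQM.smul {n m : ℕ} {g : Fin m → MvPolynomial (Fin n) ℝ} {d : ℕ}
    {p : MvPolynomial (Fin n) ℝ} {c : ℝ} (hc : 0 ≤ c) (hp : InQM g d p) :
    InQM g d (c • p) := by
  obtain ⟨a, s, ha, hs, rfl⟩ := hp
  refine ⟨c • a, fun j => c • s j, ha.smul hc, fun j => (hs j).smul hc, ?_⟩
  rw [smul_add, Finset.smul_sum]
  simp only [smul_mul_assoc]

theorem InQM.mono {n m : ℕ} {g : Fin m → MvPolynomial (Fin n) ℝ} {d e : ℕ} (h : d ≤ e)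
    {p : MvPolynomial (Fin n) ℝ} (hp : InQM g d p) : InQM g e p := by
  obtain ⟨a, s, ha, hs, rfl⟩ := hp
  exact ⟨a, s, ha.mono h, fun j => (hs j).mono (by omega), rfl⟩

theorem InQM.degree {n m : ℕ} {g : Fin m → MvPolynomial (Fin n) ℝ} {d : ℕ}
    (hd : ∀ j, dHalf (g j) ≤ d)
    {p : MvPolynomial (Fin n) ℝ} (hp : InQM g d p) : p.totalDegree ≤ 2 * d := by
  obtain ⟨a, s, ha, hs, rfl⟩ := hp
  refine (totalDegree_add _ _).trans (max_le ha.degree ?_)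
  refine totalDegree_finsetSum_le fun j _ => ?_
  have h1 := totalDegree_mul (s j) (g j)
  have h2 := (hs j).degree
  have h3 := hd j
  unfold dHalf at h2 h3
  omega

theorem InQM.nonneg {n m : ℕ} {g : Fin m → MvPolynomial (Fin n) ℝ} {d : ℕ}
    {p : MvPolynomial (Fin n) ℝ} (hp : InQM g d p) (L : MvPolynomial (Fin n) ℝ →ₗ[ℝ] ℝ)
    (hL : ∀ q : MvPolynomial (Fin n) ℝ, q.totalDegree ≤ d → 0 ≤ L (q ^ 2))
    (hL' : ∀ j, ∀ q : MvPolynomial (Fin n) ℝ, q.totalDegree ≤ d - dHalf (g j) →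
      0 ≤ L (g j * q ^ 2)) : 0 ≤ L p := by
  obtain ⟨a, s, ha, hs, rfl⟩ := hp
  rw [map_add, map_sum]
  exact add_nonneg (ha.nonneg L hL)
    (Finset.sum_nonneg fun j _ => (hs j).nonneg_mul L _ (hL' j))


/-- the Gaussian density -/
noncomputable def gdens (n : ℕ) (x : Fin n → ℝ) : ℝ :=
  (2 * Real.pi) ^ (-(n : ℝ) / 2) * Real.exp (-(∑ i, x i ^ 2) / 2)

theorem gdens_nonneg {n : ℕ} (x : Fin n → ℝ) : 0 ≤ gdens n x := by
  unfold gdens; positivity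

theorem gdens_continuous (n : ℕ) : Continuous (gdens n) := by
  unfold gdens; fun_prop

theorem gaussian_eq (n : ℕ) :
    gaussianMeasure n = volume.withDensity fun x => ENNReal.ofReal (gdens n x) := rfl

theorem integrable_gaussian_iff {n : ℕ} (F : (Fin n → ℝ) → ℝ) :
    Integrable F (gaussianMeasure n) ↔ Integrable (fun x => gdens n x * F x) volume := by
  rw [gaussian_eq, integrable_withDensity_iff_integrable_smul']
  · simp only [ENNReal.toReal_ofReal (gdens_nonneg _), smul_eq_mul]
  · exact (gdens_continuous n).measurable.ennreal_ofReal
  · exact ae_of_all _ fun _ => ENNReal.ofReal_lt_top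

theorem integral_gaussMeas {n : ℕ} (F : (Fin n → ℝ) → ℝ) :
    ∫ x, F x ∂gaussianMeasure n = ∫ x, gdens n x * F x := by
  rw [gaussian_eq, integral_withDensity_eq_integral_toReal_smul]
  · simp only [ENNReal.toReal_ofReal (gdens_nonneg _), smul_eq_mul]
  · exact (gdens_continuous n).measurable.ennreal_ofReal
  · exact ae_of_all _ fun _ => ENNReal.ofReal_lt_top

/-- the dominating functions `exp (c * ∑ |x i|)` -/
noncomputable def ew {n : ℕ} (c : ℝ) (x : Fin n → ℝ) : ℝ := Real.exp (c * ∑ i, |x i|)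

theorem ew_continuous {n : ℕ} (c : ℝ) : Continuous (ew (n := n) c) := by
  unfold ew; fun_prop

theorem ew_pos {n : ℕ} (c : ℝ) (x : Fin n → ℝ) : 0 < ew c x := Real.exp_pos _

theorem ew_mul {n : ℕ} (c d : ℝ) (x : Fin n → ℝ) : ew c x * ew d x = ew (c + d) x := by
  unfold ew; rw [← Real.exp_add, add_mul]

theorem one_le_ew {n : ℕ} {c : ℝ} (hc : 0 ≤ c) (x : Fin n → ℝ) : 1 ≤ ew c x :=
  Real.one_le_exp (mul_nonneg hc (Finset.sum_nonneg fun _ _ => abs_nonneg _))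

theorem ew_mono {n : ℕ} {c d : ℝ} (h : c ≤ d) (x : Fin n → ℝ) : ew c x ≤ ew d x :=
  Real.exp_le_exp.2 (mul_le_mul_of_nonneg_right h (Finset.sum_nonneg fun _ _ => abs_nonneg _))

theorem integrable_one_dim (c : ℝ) :
    Integrable (fun t : ℝ => Real.exp (-t ^ 2 / 2 + c * |t|)) volume := by
  have h := (integrable_exp_neg_mul_sq (b := 1 / 4) (by norm_num)).const_mul (Real.exp (c ^ 2))
  refine h.mono' (by fun_prop) (ae_of_all _ fun t => ?_)
  rw [Real.norm_eq_abs, abs_of_pos (Real.exp_pos _), ← Real.exp_add]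
  refine Real.exp_le_exp.2 ?_
  have h1 := sq_abs t
  nlinarith [sq_nonneg (|t| / 2 - c)]

theorem integrable_ew {n : ℕ} (c : ℝ) : Integrable (ew (n := n) c) (gaussianMeasure n) := by
  rw [integrable_gaussian_iff]
  have h := (Integrable.fintype_prod (𝕜 := ℝ) (ι := Fin n) (E := ℝ) (μ := fun _ => volume)
    (f := fun _ t => Real.exp (-t ^ 2 / 2 + c * |t|))
    (fun _ => integrable_one_dim c)).const_mul ((2 * Real.pi) ^ (-(n : ℝ) / 2))
  refine h.congr (ae_of_all _ fun x => ?_)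
  simp only [gdens, ew]
  rw [mul_assoc, ← Real.exp_add, ← Real.exp_sum]
  congr 2
  rw [Finset.sum_add_distrib, Finset.mul_sum, ← Finset.sum_div, Finset.sum_neg_distrib]

instance gaussian_finite (n : ℕ) : IsFiniteMeasure (gaussianMeasure n) := by
  have h : Integrable (fun _ : Fin n → ℝ => (1 : ℝ)) (gaussianMeasure n) :=
    (integrable_ew (n := n) 0).congr (ae_of_all _ fun x => by simp [ew])
  rcases integrable_const_iff.1 h with h | h
  · simp at h
  · exact h

theorem poly_bound {n : ℕ} (p : MvPolynomial (Fin n) ℝ) :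
    ∃ C c : ℝ, 0 ≤ C ∧ 0 ≤ c ∧ ∀ x, |eval x p| ≤ C * ew c x := by
  induction p using MvPolynomial.induction_on with
  | C a => exact ⟨|a|, 0, abs_nonneg _, le_rfl, fun x => by simp [ew]⟩
  | add p q hp hq =>
    obtain ⟨C, c, hC, hc, h⟩ := hp
    obtain ⟨D, d, hD, hd, h'⟩ := hq
    refine ⟨C + D, c + d, by positivity, by positivity, fun x => ?_⟩
    rw [map_add, add_mul]
    refine (abs_add_le _ _).trans (add_le_add ((h x).trans ?_) ((h' x).trans ?_))
    · exact mul_le_mul_of_nonneg_left (ew_mono (by linarith) x) hC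
    · exact mul_le_mul_of_nonneg_left (ew_mono (by linarith) x) hD
  | mul_X p i hp =>
    obtain ⟨C, c, hC, hc, h⟩ := hp
    refine ⟨C, c + 1, hC, by positivity, fun x => ?_⟩
    rw [map_mul, eval_X, abs_mul, ← ew_mul, ← mul_assoc]
    refine mul_le_mul (h x) ?_ (abs_nonneg _) (mul_nonneg hC (ew_pos _ _).le)
    have h1 : |x i| ≤ ∑ i, |x i| :=
      Finset.single_le_sum (f := fun i => |x i|) (fun _ _ => abs_nonneg _) (Finset.mem_univ i)
    have h2 := Real.add_one_le_exp (∑ i, |x i|)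
    unfold ew
    rw [one_mul]
    linarith

theorem poly_continuous {n : ℕ} (p : MvPolynomial (Fin n) ℝ) :
    Continuous fun x : Fin n → ℝ => eval x p := MvPolynomial.continuous_eval p

/-- a function which is integrable against every exponential -/
def ExpInt {n : ℕ} (ν : Measure (Fin n → ℝ)) (h : (Fin n → ℝ) → ℝ) : Prop :=
  AEStronglyMeasurable h ν ∧ ∀ c : ℝ, Integrable (fun x => h x * ew c x) ν

theorem ExpInt.integrable {n : ℕ} {ν : Measure (Fin n → ℝ)} {h : (Fin n → ℝ) → ℝ}
    (hh : ExpInt ν h) : Integrable h ν := by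
  have := hh.2 0
  simpa [ew] using this

theorem ExpInt.mul_poly {n : ℕ} {ν : Measure (Fin n → ℝ)} {h : (Fin n → ℝ) → ℝ}
    (hh : ExpInt ν h) (p : MvPolynomial (Fin n) ℝ) : ExpInt ν (fun x => h x * eval x p) := by
  obtain ⟨C, c, hC, hc, hb⟩ := poly_bound p
  have hm : AEStronglyMeasurable (fun x => h x * eval x p) ν :=
    hh.1.mul (poly_continuous p).aestronglyMeasurable
  refine ⟨hm, fun e => ?_⟩
  refine ((hh.2 (c + e)).norm.const_mul C).mono'
    (hm.mul (ew_continuous e).aestronglyMeasurable) (ae_of_all _ fun x => ?_)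
  rw [norm_mul, norm_mul, norm_mul, Real.norm_eq_abs (eval x p), ← ew_mul, norm_mul]
  rw [Real.norm_of_nonneg (ew_pos c x).le]
  calc ‖h x‖ * |eval x p| * ‖ew e x‖ ≤ ‖h x‖ * (C * ew c x) * ‖ew e x‖ := by
        gcongr; exact hb x
    _ = _ := by ring

theorem ExpInt.bdd_mul {n : ℕ} {ν : Measure (Fin n → ℝ)} {h k : (Fin n → ℝ) → ℝ}
    (hh : ExpInt ν h) (hk : AEStronglyMeasurable k ν) (hb : ∀ᵐ x ∂ν, |k x| ≤ 1) :
    ExpInt ν (fun x => k x * h x) := by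
  refine ⟨hk.mul hh.1, fun c => ?_⟩
  refine (hh.2 c).norm.mono'
    ((hk.mul hh.1).mul (ew_continuous c).aestronglyMeasurable) ?_
  filter_upwards [hb] with x hx
  rw [mul_assoc, norm_mul]
  exact mul_le_of_le_one_left (norm_nonneg _) hx

theorem ExpInt.one {n : ℕ} : ExpInt (gaussianMeasure n) (fun _ => 1) :=
  ⟨aestronglyMeasurable_const, fun c => by simpa using integrable_ew c⟩

theorem ExpInt.sub {n : ℕ} {ν : Measure (Fin n → ℝ)} {h k : (Fin n → ℝ) → ℝ}
    (hh : ExpInt ν h) (hk : ExpInt ν k) : ExpInt ν (fun x => h x - k x) :=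
  ⟨hh.1.sub hk.1, fun c => by
    simp only [sub_mul]
    exact (hh.2 c).sub (hk.2 c)⟩

theorem ExpInt.mono {n : ℕ} {μ ν : Measure (Fin n → ℝ)} {h : (Fin n → ℝ) → ℝ}
    (hh : ExpInt ν h) (hm : μ ≤ ν) : ExpInt μ h :=
  ⟨hh.1.mono_measure hm, fun c => (hh.2 c).mono_measure hm⟩

theorem ExpInt.poly_integrable {n : ℕ} {ν : Measure (Fin n → ℝ)}
    (hh : ExpInt ν (fun _ => 1)) (p : MvPolynomial (Fin n) ℝ) :
    Integrable (fun x => eval x p) ν := by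
  simpa using (hh.mul_poly p).integrable

/-- an `L²` function with respect to a measure with exponential moments -/
theorem ExpInt.of_memLp {n : ℕ} {ν : Measure (Fin n → ℝ)} (hν : ExpInt ν (fun _ => 1))
    {h : (Fin n → ℝ) → ℝ} (hh : MemLp h 2 ν) : ExpInt ν h := by
  refine ⟨hh.1, fun c => ?_⟩
  have h2 : MemLp (ew (n := n) c) 2 ν := by
    rw [memLp_two_iff_integrable_sq (ew_continuous c).aestronglyMeasurable]
    have := hν.2 (c + c)
    simp only [one_mul, ← ew_mul] at this
    simpa only [pow_two] using this
  exact hh.integrable_mul h2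

/-- integration of polynomials as a linear map -/
noncomputable def polyInt {n : ℕ} (ν : Measure (Fin n → ℝ)) (hν : ExpInt ν (fun _ => 1)) :
    MvPolynomial (Fin n) ℝ →ₗ[ℝ] ℝ where
  toFun p := ∫ x, eval x p ∂ν
  map_add' p q := by
    simp only [map_add]
    exact integral_add (hν.poly_integrable p) (hν.poly_integrable q)
  map_smul' c p := by
    simp only [smul_eval, RingHom.id_apply, smul_eq_mul]
    exact integral_const_mul _ _

theorem polyInt_apply {n : ℕ} (ν : Measure (Fin n → ℝ)) (hν : ExpInt ν (fun _ => 1))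
    (p : MvPolynomial (Fin n) ℝ) : polyInt ν hν p = ∫ x, eval x p ∂ν := rfl

theorem gmom_eq {n : ℕ} (α : Fin n →₀ ℕ) :
    gmom n α = polyInt (gaussianMeasure n) ExpInt.one (monomial α 1) := by
  rw [polyInt_apply]
  unfold gmom
  congr 1
  ext x
  rw [eval_monomial, one_mul, Finsupp.prod_fintype _ _ (fun _ => pow_zero _)]


/-- one-dimensional Stokes formula for a truncated function -/
theorem line_stokes (k k' : ℝ → ℝ) (s : Set ℝ) (Z : Set ℝ) (hZ : Z.Countable)
    (hk : ∀ t, HasDerivAt k (k' t) t) (hki : Integrable k) (hk'i : Integrable k')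
    (hs : MeasurableSet s) (hfr : ∀ t ∈ frontier s, k t = 0)
    (hfrZ : frontier s ⊆ Z) : ∫ t, s.indicator k' t = 0 := by
  have hcont : Continuous (s.indicator k) :=
    continuous_iff_continuousAt.2 fun t => by
      have hkc : Continuous k := continuous_iff_continuousAt.2 fun t => (hk t).continuousAt
      by_cases ht : t ∈ frontier s
      · have h0 := hfr t ht
        have hv : s.indicator k t = 0 := by
          by_cases hm : t ∈ s <;> simp [hm, h0]
        rw [ContinuousAt, hv]
        refine squeeze_zero_norm (a := fun x => ‖k x‖) (fun x => norm_indicator_le_norm_self _ _) ?_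
        have := (hkc.norm.tendsto t)
        simpa [h0] using this
      · by_cases hi : t ∈ interior s
        · refine hkc.continuousAt.congr ?_
          filter_upwards [mem_interior_iff_mem_nhds.1 hi] with x hx
          rw [Set.indicator_of_mem hx]
        · have hc : t ∉ closure s := fun hc => ht ⟨hc, hi⟩
          have : (closure s)ᶜ ∈ 𝓝 t := isClosed_closure.isOpen_compl.mem_nhds hc
          refine (continuousAt_const (y := (0 : ℝ))).congr ?_
          filter_upwards [this] with x hx
          rw [Set.indicator_of_notMem fun h => hx (subset_closure h)]
  have hder : ∀ t, t ∉ Z → HasDerivAt (s.indicator k) (s.indicator k' t) t := by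
    intro t htZ
    have ht : t ∉ frontier s := fun h => htZ (hfrZ h)
    by_cases hi : t ∈ interior s
    · rw [Set.indicator_of_mem (interior_subset hi)]
      refine (hk t).congr_of_eventuallyEq ?_
      filter_upwards [mem_interior_iff_mem_nhds.1 hi] with x hx
      rw [Set.indicator_of_mem hx]
    · have hc : t ∉ closure s := fun hc => ht ⟨hc, hi⟩
      have : (closure s)ᶜ ∈ 𝓝 t := isClosed_closure.isOpen_compl.mem_nhds hc
      rw [Set.indicator_of_notMem fun h => hc (subset_closure h)]
      refine (hasDerivAt_const t (0 : ℝ)).congr_of_eventuallyEq ?_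
      filter_upwards [this] with x hx
      rw [Set.indicator_of_notMem fun h => hx (subset_closure h)]
  have hintg : Integrable (s.indicator k') := hk'i.indicator hs
  have hFTC : ∀ R : ℝ, ∫ t in (-R)..R, s.indicator k' t = s.indicator k R - s.indicator k (-R) := by
    intro R
    exact integral_eq_of_hasDerivAt_off_countable _ _ hZ hcont.continuousOn
      (fun x hx => hder x hx.2) hintg.intervalIntegrable
  have h1 : Tendsto (fun R : ℝ => ∫ t in (-R)..R, s.indicator k' t) atTop
      (𝓝 (∫ t, s.indicator k' t)) :=
    intervalIntegral_tendsto_integral hintg tendsto_neg_atTop_atBot tendsto_id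
  have htop : Tendsto k atTop (𝓝 0) :=
    tendsto_zero_of_hasDerivAt_of_integrableOn_Ioi (a := 0) (fun x _ => hk x)
      hk'i.integrableOn hki.integrableOn
  have hbot : Tendsto k atBot (𝓝 0) :=
    tendsto_zero_of_hasDerivAt_of_integrableOn_Iic (a := 0) (fun x _ => hk x)
      hk'i.integrableOn hki.integrableOn
  have htop' : Tendsto (s.indicator k) atTop (𝓝 0) :=
    squeeze_zero_norm (a := fun x => ‖k x‖) (fun x => norm_indicator_le_norm_self _ _)
      (by simpa using htop.norm)
  have hbot' : Tendsto (s.indicator k) atBot (𝓝 0) :=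
    squeeze_zero_norm (a := fun x => ‖k x‖) (fun x => norm_indicator_le_norm_self _ _)
      (by simpa using hbot.norm)
  have h2 : Tendsto (fun R : ℝ => s.indicator k R - s.indicator k (-R)) atTop (𝓝 (0 - 0)) :=
    htop'.sub (hbot'.comp tendsto_neg_atTop_atBot)
  simp only [← hFTC, sub_zero] at h2
  exact tendsto_nhds_unique h1 h2

theorem hasDerivAt_eval_line {n : ℕ} (p : MvPolynomial (Fin n) ℝ) (i : Fin n) (x : Fin n → ℝ)
    (t : ℝ) : HasDerivAt (fun s : ℝ => eval (Function.update x i s) p)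
      (eval (Function.update x i t) (pderiv i p)) t := by
  induction p using MvPolynomial.induction_on with
  | C a => simpa using hasDerivAt_const t a
  | add p q hp hq =>
    simp only [map_add]
    exact hp.add hq
  | mul_X p j hp =>
    have hX : HasDerivAt (fun s : ℝ => Function.update x i s j) (if j = i then 1 else 0) t := by
      by_cases h : j = i
      · subst h
        simp only [Function.update_self, if_true]
        exact hasDerivAt_id t
      · simpa [h] using hasDerivAt_const t (x j)
    have := hp.mul hX
    simp only [map_mul, eval_X]
    refine HasDerivAt.congr_deriv this ?_
    rw [Derivation.leibniz]
    by_cases h : j = i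
    · subst h; simp [pderiv_X_self]; ring
    · simp [pderiv_X_of_ne h, h]; ring

theorem hasDerivAt_gdens_line {n : ℕ} (i : Fin n) (x : Fin n → ℝ) (t : ℝ) :
    HasDerivAt (fun s : ℝ => gdens n (Function.update x i s))
      (-t * gdens n (Function.update x i t)) t := by
  have h1 : HasDerivAt (fun s : ℝ => -(∑ j, Function.update x i s j ^ 2) / 2) (-t) t := by
    have h := hasDerivAt_eval_line (∑ j, X j ^ 2 : MvPolynomial (Fin n) ℝ) i x t
    have h2 : eval (Function.update x i t) (pderiv i (∑ j, X j ^ 2 : MvPolynomial (Fin n) ℝ))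
        = 2 * t := by
      rw [map_sum, map_sum, Finset.sum_eq_single i]
      · simp [Derivation.leibniz_pow]
      · intro j _ hj
        simp [Derivation.leibniz_pow, pderiv_X_of_ne hj]
      · simp
    rw [h2] at h
    simp only [map_sum, map_pow, eval_X] at h
    refine HasDerivAt.congr_deriv (h.neg.div_const 2) ?_
    ring
  have := (h1.exp.const_mul ((2 * Real.pi) ^ (-(n : ℝ) / 2)))
  unfold gdens
  refine HasDerivAt.congr_deriv this ?_
  ring

/-- zeros of a polynomial on a line: finite, or the whole line -/
theorem line_zeros {n : ℕ} (p : MvPolynomial (Fin n) ℝ) (i : Fin n) (x : Fin n → ℝ) :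
    {t : ℝ | eval (Function.update x i t) p = 0}.Countable ∨
      ∀ t, eval (Function.update x i t) p = 0 := by
  set r : Polynomial ℝ :=
    aeval (Function.update (fun j => Polynomial.C (x j)) i Polynomial.X) p with hr
  have heval : ∀ t, eval (Function.update x i t) p = r.eval t := by
    intro t
    rw [hr, ← Polynomial.coe_evalRingHom, aeval_def, eval₂_eq_eval_map,
      ← MvPolynomial.eval₂_eq_eval_map, MvPolynomial.hom_eval₂]
    rw [MvPolynomial.eval, MvPolynomial.coe_eval₂Hom]
    congr 1
    · ext a; simp
    · funext j
      by_cases h : j = i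
      · subst h; simp
      · simp [h]
  by_cases h0 : r = 0
  · right; intro t; rw [heval, h0]; simp
  · left
    refine (Set.Finite.subset (r.roots.toFinset.finite_toSet) ?_).countable
    intro t ht
    have : r.eval t = 0 := by rw [← heval]; exact ht
    simpa [h0] using this

theorem semialg_closed {n m : ℕ} (g : Fin m → MvPolynomial (Fin n) ℝ) :
    IsClosed (semialg g) := by
  have : semialg g = ⋂ j, {x | 0 ≤ eval x (g j)} := by ext x; simp [semialg]
  rw [this]
  exact isClosed_iInter fun j => isClosed_le continuous_const (poly_continuous _)

theorem stokes {n m : ℕ} (g : Fin m → MvPolynomial (Fin n) ℝ) (f : MvPolynomial (Fin n) ℝ)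
    (hfb : ∀ x ∈ frontier (semialg g), eval x f = 0) (i : Fin n) (α : Fin n →₀ ℕ) :
    ∫ x in semialg g, eval x (pStokesG f i α) ∂gaussianMeasure n = 0 := by
  obtain ⟨n, rfl⟩ : ∃ k, n = k + 1 := ⟨n - 1, by have := i.2; omega⟩
  set Ω := semialg g with hΩ
  have hΩc : IsClosed Ω := semialg_closed g
  set q : MvPolynomial (Fin (n + 1)) ℝ := monomial α 1 * f with hq
  rw [← integral_indicator hΩc.measurableSet, integral_gaussMeas]
  set K : (Fin (n + 1) → ℝ) → ℝ := fun x => gdens _ x * eval x q with hK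
  set K' : (Fin (n + 1) → ℝ) → ℝ := fun x => gdens _ x * eval x (pStokesG f i α) with hK'
  have hKi : Integrable K :=
    (integrable_gaussian_iff _).1 (ExpInt.one.poly_integrable q)
  have hK'i : Integrable K' :=
    (integrable_gaussian_iff _).1 (ExpInt.one.poly_integrable (pStokesG f i α))
  have hFK : (fun x => gdens _ x * Ω.indicator (fun x => eval x (pStokesG f i α)) x)
      = Ω.indicator K' := by
    ext x
    by_cases hx : x ∈ Ω <;> simp [hx, hK']
  rw [hFK]
  have hmp := (volume_preserving_piFinSuccAbove (fun _ : Fin (n + 1) => ℝ) i).symm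
  have hKi' := (hmp.integrable_comp_emb (MeasurableEquiv.measurableEmbedding _)).2 hKi
  have hK'i' := (hmp.integrable_comp_emb (MeasurableEquiv.measurableEmbedding _)).2 hK'i
  have hIi' := (hmp.integrable_comp_emb (MeasurableEquiv.measurableEmbedding _)).2
    (hK'i.indicator hΩc.measurableSet)
  rw [← hmp.integral_comp' (Ω.indicator K')]
  have hIi2 : Integrable (fun z : ℝ × (Fin n → ℝ) => Ω.indicator K'
    ((MeasurableEquiv.piFinSuccAbove (fun _ : Fin (n + 1) => ℝ) i).symm z))
    ((volume : Measure ℝ).prod (volume : Measure (Fin n → ℝ))) := hIi'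
  have hKi2 : Integrable (K ∘ (MeasurableEquiv.piFinSuccAbove (fun _ : Fin (n + 1) => ℝ) i).symm)
    ((volume : Measure ℝ).prod (volume : Measure (Fin n → ℝ))) := hKi'
  have hK'i2 : Integrable (K' ∘ (MeasurableEquiv.piFinSuccAbove (fun _ : Fin (n + 1) => ℝ) i).symm)
    ((volume : Measure ℝ).prod (volume : Measure (Fin n → ℝ))) := hK'i'
  rw [Measure.volume_eq_prod, integral_prod_symm _ hIi2]
  refine integral_eq_zero_of_ae ?_
  filter_upwards [hKi2.prod_left_ae, hK'i2.prod_left_ae] with y hy hy'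
  have hup : ∀ t : ℝ, (MeasurableEquiv.piFinSuccAbove (fun _ : Fin (n + 1) => ℝ) i).symm (t, y)
      = Function.update (i.insertNth (0 : ℝ) y : Fin (n + 1) → ℝ) i t := by
    intro t
    simp [MeasurableEquiv.piFinSuccAbove, Fin.update_insertNth, Fin.insertNthEquiv]
  simp only [Function.comp_def, hup] at hy hy' ⊢
  set x0 : Fin (n + 1) → ℝ := i.insertNth (0 : ℝ) y
  have hline : Continuous fun t : ℝ => Function.update x0 i t := continuous_const.update i continuous_id
  have hder : ∀ t, HasDerivAt (fun t => K (Function.update x0 i t)) (K' (Function.update x0 i t)) t := by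
    intro t
    have := (hasDerivAt_gdens_line i x0 t).mul (hasDerivAt_eval_line q i x0 t)
    refine HasDerivAt.congr_deriv this ?_
    simp only [hK', pStokesG, ← hq, map_sub, map_mul, eval_X, Function.update_self]
    ring
  have hfront : ∀ t ∈ frontier ((fun t : ℝ => Function.update x0 i t) ⁻¹' Ω),
      eval (Function.update x0 i t) q = 0 := by
    intro t ht
    have h1 : Function.update x0 i t ∈ frontier Ω := hline.frontier_preimage_subset Ω ht
    rw [hq, map_mul, hfb _ h1, mul_zero]
  change ∫ t, ((fun t : ℝ => Function.update x0 i t) ⁻¹' Ω).indicator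
    (fun t => K' (Function.update x0 i t)) t = 0
  rcases line_zeros q i x0 with hc | h0
  · refine line_stokes _ _ _ _ hc hder hy hy' (hline.measurable hΩc.measurableSet) ?_ hfront
    intro t ht
    simp only [hK, hfront t ht, mul_zero]
  · have hz : ∀ t, K' (Function.update x0 i t) = 0 := by
      intro t
      have h1 := hder t
      have h2 : (fun t => K (Function.update x0 i t)) = fun _ => 0 := by
        ext s; simp only [hK, h0 s, mul_zero]
      rw [h2] at h1
      exact h1.unique (hasDerivAt_const t 0)
    simp [hz]


theorem dual_bound {n : ℕ} (Λ : StrongDual ℝ (Fin n → ℝ)) (x : Fin n → ℝ) :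
    |Λ x| ≤ ‖Λ‖ * ∑ i, |x i| := by
  refine (Λ.le_opNorm x).trans (mul_le_mul_of_nonneg_left ?_ (norm_nonneg _))
  refine (pi_norm_le_iff_of_nonneg (Finset.sum_nonneg fun _ _ => abs_nonneg _)).2 fun i => ?_
  exact Finset.single_le_sum (f := fun i => |x i|) (fun _ _ => abs_nonneg _) (Finset.mem_univ i)

theorem dual_poly {n : ℕ} (Λ : StrongDual ℝ (Fin n → ℝ)) :
    ∃ p : MvPolynomial (Fin n) ℝ, ∀ x, eval x p = Λ x := by
  refine ⟨∑ i, C (Λ (Pi.single i 1)) * X i, fun x => ?_⟩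
  rw [map_sum]
  conv_rhs => rw [pi_eq_sum_univ' x]
  rw [map_sum]
  refine Finset.sum_congr rfl fun i _ => ?_
  simp only [map_mul, eval_C, eval_X, map_smul, smul_eq_mul]
  rw [mul_comm]

/-- a function orthogonal to all polynomials has vanishing Fourier transform -/
theorem fourier_vanish {n : ℕ} {ν : Measure (Fin n → ℝ)} {ψ : (Fin n → ℝ) → ℝ}
    (hψ : ExpInt ν ψ) (h0 : ∀ p : MvPolynomial (Fin n) ℝ, ∫ x, ψ x * eval x p ∂ν = 0)
    (Λ : StrongDual ℝ (Fin n → ℝ)) :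
    ∫ x, Complex.exp (Λ x * Complex.I) * (ψ x : ℂ) ∂ν = 0 := by
  obtain ⟨l, hl⟩ := dual_poly Λ
  have hterm : ∀ k : ℕ, ∫ x, ((k.factorial : ℂ)⁻¹ * Complex.I ^ k) *
      ((ψ x * eval x (l ^ k) : ℝ) : ℂ) ∂ν = 0 := by
    intro k
    rw [integral_const_mul, integral_complex_ofReal, h0]
    simp
  have hsum : HasSum (fun k : ℕ => ∫ x, ((k.factorial : ℂ)⁻¹ * Complex.I ^ k) *
      ((ψ x * eval x (l ^ k) : ℝ) : ℂ) ∂ν)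
      (∫ x, Complex.exp (Λ x * Complex.I) * (ψ x : ℂ) ∂ν) := by
    have hexp : ∀ x, HasSum (fun k : ℕ => |ψ x| * (|Λ x| ^ k / k.factorial))
        (|ψ x| * Real.exp |Λ x|) := by
      intro x
      have := NormedSpace.expSeries_div_hasSum_exp (|Λ x|)
      rw [← Real.exp_eq_exp_ℝ] at this
      exact this.mul_left _
    refine hasSum_integral_of_dominated_convergence
      (fun (k : ℕ) x => |ψ x| * (|Λ x| ^ k / k.factorial)) ?_ ?_ ?_ ?_ ?_
    · intro k
      exact (Complex.continuous_ofReal.comp_aestronglyMeasurable (hψ.mul_poly _).1).const_mul _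
    · intro k
      refine ae_of_all _ fun x => le_of_eq ?_
      rw [norm_mul, norm_mul, norm_inv, norm_pow, Complex.norm_I, one_pow, mul_one,
        Complex.norm_real, Complex.norm_natCast, map_pow, hl, norm_mul, norm_pow,
        Real.norm_eq_abs, Real.norm_eq_abs]
      field_simp
    · exact ae_of_all _ fun x => (hexp x).summable
    · simp only [fun x => (hexp x).tsum_eq]
      refine ((hψ.2 ‖Λ‖).norm).mono' ?_ (ae_of_all _ fun x => ?_)
      · exact hψ.1.norm.mul (by fun_prop)
      · rw [norm_mul, norm_mul, Real.norm_eq_abs, Real.norm_eq_abs, abs_abs, Real.norm_eq_abs,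
          Real.norm_eq_abs, abs_of_pos (ew_pos _ _), abs_of_pos (Real.exp_pos _)]
        exact mul_le_mul_of_nonneg_left (Real.exp_le_exp.2 (dual_bound Λ x)) (abs_nonneg _)
    · refine ae_of_all _ fun x => ?_
      have := NormedSpace.expSeries_div_hasSum_exp ((Λ x : ℂ) * Complex.I)
      rw [← Complex.exp_eq_exp_ℂ] at this
      refine (this.mul_right (ψ x : ℂ)).congr_fun ?_
      intro k
      rw [map_pow, hl]
      push_cast
      rw [mul_pow]
      ring
  simp only [hterm] at hsum
  exact hsum.unique hasSum_zero

theorem ae_zero_of_moments {n : ℕ} {ν : Measure (Fin n → ℝ)} [IsFiniteMeasure ν]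
    {ψ : (Fin n → ℝ) → ℝ}
    (hψ : ExpInt ν ψ) (h0 : ∀ p : MvPolynomial (Fin n) ℝ, ∫ x, ψ x * eval x p ∂ν = 0) :
    ψ =ᵐ[ν] 0 := by
  have hi := hψ.integrable
  have hmeas : AEMeasurable ψ ν := hi.aemeasurable
  set ν1 := ν.withDensity fun x => ENNReal.ofReal (ψ x) with hν1
  set ν2 := ν.withDensity fun x => ENNReal.ofReal (-ψ x) with hν2
  have hf1 : IsFiniteMeasure ν1 := isFiniteMeasure_withDensity_ofReal hi.2
  have hf2 : IsFiniteMeasure ν2 := isFiniteMeasure_withDensity_ofReal hi.neg.2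
  have hm1 : AEMeasurable (fun x => ENNReal.ofReal (ψ x)) ν := hmeas.ennreal_ofReal
  have hm2 : AEMeasurable (fun x => ENNReal.ofReal (-ψ x)) ν := hmeas.neg.ennreal_ofReal
  have hintg : ∀ (Λ : StrongDual ℝ (Fin n → ℝ)) (φ : (Fin n → ℝ) → ℝ), AEStronglyMeasurable φ ν →
      (∀ x, |φ x| ≤ |ψ x|) →
      Integrable (fun x => φ x • Complex.exp (Λ x * Complex.I)) ν := by
    intro Λ φ hφ hb
    refine hi.norm.mono' (hφ.smul (by fun_prop)) (ae_of_all _ fun x => ?_)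
    rw [norm_smul, Complex.norm_exp_ofReal_mul_I, mul_one]
    exact hb x
  have heq : ν1 = ν2 := by
    refine Measure.ext_of_charFunDual (funext fun Λ => ?_)
    rw [charFunDual_apply, charFunDual_apply, hν1, hν2,
      integral_withDensity_eq_integral_toReal_smul₀ hm1
        (ae_of_all _ fun _ => ENNReal.ofReal_lt_top),
      integral_withDensity_eq_integral_toReal_smul₀ hm2
        (ae_of_all _ fun _ => ENNReal.ofReal_lt_top), ← sub_eq_zero, ← integral_sub]
    · rw [← fourier_vanish hψ h0 Λ]
      congr 1
      ext x
      rw [← sub_smul, ENNReal.toReal_ofReal', ENNReal.toReal_ofReal', max_zero_sub_eq_self,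
        Complex.real_smul, mul_comm]
    · refine hintg Λ _ hm1.ennreal_toReal.aestronglyMeasurable fun x => ?_
      rw [ENNReal.toReal_ofReal', abs_of_nonneg (le_max_right _ _)]
      exact max_le (le_abs_self _) (abs_nonneg _)
    · refine hintg Λ _ hm2.ennreal_toReal.aestronglyMeasurable fun x => ?_
      rw [ENNReal.toReal_ofReal', abs_of_nonneg (le_max_right _ _)]
      exact max_le (neg_le_abs _) (abs_nonneg _)
  have := (withDensity_eq_iff_of_sigmaFinite hm1 hm2).1 heq
  filter_upwards [this] with x hx
  have hx' := congrArg ENNReal.toReal hx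
  rw [ENNReal.toReal_ofReal', ENNReal.toReal_ofReal'] at hx'
  have := max_zero_sub_eq_self (ψ x)
  rw [hx', sub_self] at this
  exact this.symm

theorem poly_memLp {n : ℕ} {ν : Measure (Fin n → ℝ)} (hν : ExpInt ν (fun _ => 1))
    (p : MvPolynomial (Fin n) ℝ) : MemLp (fun x => eval x p) 2 ν := by
  rw [memLp_two_iff_integrable_sq (poly_continuous p).aestronglyMeasurable]
  exact (hν.poly_integrable (p ^ 2)).congr (ae_of_all _ fun x => map_pow _ _ _)

/-- polynomials as elements of `L²` -/
noncomputable def polyLp {n : ℕ} (ν : Measure (Fin n → ℝ)) (hν : ExpInt ν (fun _ => 1)) :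
    MvPolynomial (Fin n) ℝ →ₗ[ℝ] Lp ℝ 2 ν where
  toFun p := (poly_memLp hν p).toLp _
  map_add' p q := by
    rw [← MemLp.toLp_add]
    congr 1
    ext x
    simp
  map_smul' c p := by
    rw [RingHom.id_apply, ← MemLp.toLp_const_smul]
    congr 1
    ext x
    simp [smul_eval]

theorem polyLp_coe {n : ℕ} (ν : Measure (Fin n → ℝ)) (hν : ExpInt ν (fun _ => 1))
    (p : MvPolynomial (Fin n) ℝ) : (polyLp ν hν p : (Fin n → ℝ) → ℝ) =ᵐ[ν] fun x => eval x p :=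
  MemLp.coeFn_toLp (poly_memLp hν p)

theorem polyLp_inner {n : ℕ} (ν : Measure (Fin n → ℝ)) (hν : ExpInt ν (fun _ => 1))
    (p : MvPolynomial (Fin n) ℝ) (h : Lp ℝ 2 ν) :
    inner ℝ (polyLp ν hν p) h = ∫ x, h x * eval x p ∂ν := by
  rw [L2.inner_def]
  refine integral_congr_ae ?_
  filter_upwards [polyLp_coe ν hν p] with x hx
  rw [hx]
  simp

theorem polyLp_norm {n : ℕ} (ν : Measure (Fin n → ℝ)) (hν : ExpInt ν (fun _ => 1))
    (p : MvPolynomial (Fin n) ℝ) :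
    ‖polyLp ν hν p‖ ^ 2 = ∫ x, eval x p ^ 2 ∂ν := by
  rw [← real_inner_self_eq_norm_sq, polyLp_inner]
  refine integral_congr_ae ?_
  filter_upwards [polyLp_coe ν hν p] with x hx
  rw [hx, pow_two]

theorem polyLp_dense {n : ℕ} (ν : Measure (Fin n → ℝ)) [IsFiniteMeasure ν]
    (hν : ExpInt ν (fun _ => 1)) :
    (LinearMap.range (polyLp ν hν)).topologicalClosure = ⊤ := by
  rw [Submodule.topologicalClosure_eq_top_iff, Submodule.eq_bot_iff]
  intro h hh
  rw [Submodule.mem_orthogonal] at hh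
  have h0 : ∀ p : MvPolynomial (Fin n) ℝ, ∫ x, h x * eval x p ∂ν = 0 := by
    intro p
    rw [← polyLp_inner ν hν]
    exact hh _ ⟨p, rfl⟩
  exact (Lp.eq_zero_iff_ae_eq_zero).2
    (ae_zero_of_moments (ExpInt.of_memLp hν (Lp.memLp h)) h0)

theorem approx_indicator {n : ℕ} (ν : Measure (Fin n → ℝ)) [IsFiniteMeasure ν]
    (hν : ExpInt ν (fun _ => 1)) {A : Set (Fin n → ℝ)} (hA : MeasurableSet A) {ε : ℝ}
    (hε : 0 < ε) : ∃ p : MvPolynomial (Fin n) ℝ,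
      ∫ x, (eval x p - A.indicator (fun _ => 1) x) ^ 2 ∂ν < ε := by
  have hmem : MemLp (A.indicator fun _ => (1 : ℝ)) 2 ν := (memLp_const 1).indicator hA
  have hcl : hmem.toLp _ ∈ closure (LinearMap.range (polyLp ν hν) : Set (Lp ℝ 2 ν)) := by
    rw [← Submodule.topologicalClosure_coe, polyLp_dense]
    trivial
  obtain ⟨_, ⟨p, rfl⟩, hp⟩ := Metric.mem_closure_iff.1 hcl (Real.sqrt ε) (Real.sqrt_pos.2 hε)
  refine ⟨p, ?_⟩
  rw [dist_comm, dist_eq_norm] at hp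
  have h2 : ‖polyLp ν hν p - hmem.toLp _‖ ^ 2 < ε := by
    have := pow_lt_pow_left₀ hp (norm_nonneg _) two_ne_zero
    rwa [Real.sq_sqrt hε.le] at this
  rw [← real_inner_self_eq_norm_sq, L2.inner_def] at h2
  refine lt_of_eq_of_lt (integral_congr_ae ?_) h2
  filter_upwards [polyLp_coe ν hν p, hmem.coeFn_toLp, Lp.coeFn_sub (polyLp ν hν p) (hmem.toLp _)]
    with x h1 h2 h3
  rw [h3, Pi.sub_apply, h1, h2]
  simp [pow_two]

theorem nonneg_of_squares {n : ℕ} {μ : Measure (Fin n → ℝ)} {h : (Fin n → ℝ) → ℝ}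
    (hh : ExpInt μ h)
    (hpos : ∀ p : MvPolynomial (Fin n) ℝ, 0 ≤ ∫ x, h x * eval x p ^ 2 ∂μ) :
    ∀ᵐ x ∂μ, 0 ≤ h x := by
  -- reduce to a measurable representative
  obtain ⟨k, hkm, hhk⟩ : ∃ k : (Fin n → ℝ) → ℝ, Measurable k ∧ h =ᵐ[μ] k :=
    ⟨hh.1.mk h, hh.1.stronglyMeasurable_mk.measurable, hh.1.ae_eq_mk⟩
  have hk : ExpInt μ k := by
    refine ⟨hkm.aestronglyMeasurable, fun c => (hh.2 c).congr ?_⟩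
    filter_upwards [hhk] with x hx
    rw [hx]
  have hpos' : ∀ p : MvPolynomial (Fin n) ℝ, 0 ≤ ∫ x, k x * eval x p ^ 2 ∂μ := by
    intro p
    refine (hpos p).trans_eq (integral_congr_ae ?_)
    filter_upwards [hhk] with x hx
    rw [hx]
  set A : Set (Fin n → ℝ) := {x | k x < 0} with hA
  have hAm : MeasurableSet A := measurableSet_lt hkm measurable_const
  set ν := μ.withDensity fun x => ENNReal.ofReal |k x| with hν
  have hmd : Measurable fun x => ENNReal.ofReal |k x| := hkm.abs.ennreal_ofReal
  have hfin : IsFiniteMeasure ν := isFiniteMeasure_withDensity_ofReal hk.integrable.abs.2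
  have hiff : ∀ F : (Fin n → ℝ) → ℝ, Integrable F ν ↔ Integrable (fun x => |k x| * F x) μ := by
    intro F
    rw [hν, integrable_withDensity_iff_integrable_smul' hmd
      (ae_of_all _ fun _ => ENNReal.ofReal_lt_top)]
    simp only [ENNReal.toReal_ofReal (abs_nonneg _), smul_eq_mul]
  have hintg : ∀ F : (Fin n → ℝ) → ℝ, ∫ x, F x ∂ν = ∫ x, |k x| * F x ∂μ := by
    intro F
    rw [hν, integral_withDensity_eq_integral_toReal_smul hmd
      (ae_of_all _ fun _ => ENNReal.ofReal_lt_top)]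
    simp only [ENNReal.toReal_ofReal (abs_nonneg _), smul_eq_mul]
  have hνE : ExpInt ν (fun _ => 1) := by
    refine ⟨aestronglyMeasurable_const, fun c => ?_⟩
    rw [hiff]
    refine (hk.2 c).abs.congr (ae_of_all _ fun x => ?_)
    simp [abs_mul, abs_of_pos (ew_pos c x)]
  have hI1 : Integrable (fun x => |k x| * A.indicator (fun _ => 1) x) μ := by
    rw [← hiff]
    exact (integrable_const 1).indicator hAm
  have hle : ∀ ε : ℝ, 0 < ε → ∫ x, |k x| * A.indicator (fun _ => 1) x ∂μ ≤ 0 + ε := by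
    intro ε hε
    obtain ⟨p, hp⟩ := approx_indicator ν hνE hAm (half_pos hε)
    have hI2 : Integrable (fun x => k x * eval x p ^ 2) μ := by
      exact (hk.mul_poly (p ^ 2)).integrable.congr
        (ae_of_all _ fun x => congrArg (k x * ·) (map_pow _ _ _))
    have hI3 : Integrable (fun x => |k x| * (eval x p - A.indicator (fun _ => 1) x) ^ 2) μ := by
      rw [← hiff]
      have : MemLp (fun x => eval x p - A.indicator (fun _ => (1 : ℝ)) x) 2 ν :=
        (poly_memLp hνE p).sub ((memLp_const 1).indicator hAm)
      exact this.integrable_sq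
    rw [hintg] at hp
    have hmono := integral_mono (μ := μ) hI1 ((hI2.const_mul (-2)).add (hI3.const_mul 2)) (by
      intro x
      simp only [Pi.add_apply]
      by_cases hx : x ∈ A
      · have hx0 : k x < 0 := hx
        rw [Set.indicator_of_mem hx, abs_of_neg hx0]
        nlinarith [mul_nonneg (neg_nonneg.2 hx0.le) (sq_nonneg (2 * eval x p - 1))]
      · have hx0 : 0 ≤ k x := not_lt.1 hx
        rw [Set.indicator_of_notMem hx, abs_of_nonneg hx0]
        nlinarith)
    rw [integral_add' (hI2.const_mul (-2)) (hI3.const_mul 2), integral_const_mul,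
      integral_const_mul] at hmono
    have := hpos' p
    linarith
  have hzero := le_of_forall_pos_le_add hle
  have hnn : 0 ≤ᵐ[μ] fun x => |k x| * A.indicator (fun _ => 1) x :=
    ae_of_all _ fun x => mul_nonneg (abs_nonneg _) (Set.indicator_nonneg (fun _ _ => zero_le_one) _)
  have hae := (integral_eq_zero_iff_of_nonneg_ae hnn hI1).1
    (le_antisymm hzero (integral_nonneg_of_ae hnn))
  filter_upwards [hae, hhk] with x hx hx2
  rw [hx2]
  by_contra hneg
  have hxA : x ∈ A := not_le.1 hneg
  rw [Set.indicator_of_mem hxA] at hx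
  have : k x = 0 := by simpa using hx
  exact hneg this.ge

/-- bounded functionals on polynomials are represented by `L²` functions -/
theorem exists_density {n : ℕ} {ν : Measure (Fin n → ℝ)} (hν : ExpInt ν (fun _ => 1))
    (L : MvPolynomial (Fin n) ℝ →ₗ[ℝ] ℝ) (B : ℝ)
    (hL : ∀ p, |L p| ≤ B * ‖polyLp ν hν p‖) :
    ∃ h : (Fin n → ℝ) → ℝ, MemLp h 2 ν ∧ ∀ p, L p = ∫ x, h x * eval x p ∂ν := by
  set J := polyLp ν hν with hJ
  have hker : LinearMap.ker J ≤ LinearMap.ker L := by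
    intro p hp
    have h1 := hL p
    rw [LinearMap.mem_ker.1 hp, norm_zero, mul_zero] at h1
    exact abs_nonpos_iff.1 h1
  set L' : LinearMap.range J →ₗ[ℝ] ℝ :=
    ((LinearMap.ker J).liftQ L hker).comp J.quotKerEquivRange.symm.toLinearMap with hL'
  have hL'J : ∀ p, L' ⟨J p, p, rfl⟩ = L p := by
    intro p
    have : J.quotKerEquivRange.symm ⟨J p, p, rfl⟩ = (LinearMap.ker J).mkQ p :=
      J.quotKerEquivRange_symm_apply_image p _
    simp only [hL', LinearMap.comp_apply, LinearEquiv.coe_coe, this]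
    simp
  have hbound : ∀ z : LinearMap.range J, ‖L' z‖ ≤ B * ‖z‖ := by
    rintro ⟨_, p, rfl⟩
    rw [hL'J]
    exact hL p
  obtain ⟨G, hG, -⟩ := exists_extension_norm_eq _ (L'.mkContinuous B hbound)
  set h := (InnerProductSpace.toDual ℝ (Lp ℝ 2 ν)).symm G with hh
  refine ⟨h, Lp.memLp h, fun p => ?_⟩
  rw [← polyLp_inner ν hν, real_inner_comm, hh, InnerProductSpace.toDual_symm_apply]
  have := hG ⟨J p, p, rfl⟩
  rw [LinearMap.mkContinuous_apply, hL'J] at this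
  exact this.symm


theorem functional_bound {n m : ℕ} (g : Fin m → MvPolynomial (Fin n) ℝ)
    (L : MvPolynomial (Fin n) ℝ →ₗ[ℝ] ℝ)
    (h0 : ∀ p, 0 ≤ L (p ^ 2))
    (h1 : ∀ p, L (p ^ 2) ≤ ∫ x, eval x (p ^ 2) ∂gaussianMeasure n)
    (hg : ∀ j p, 0 ≤ L (g j * p ^ 2)) :
    L 1 ≤ (gaussianMeasure n (semialg g)).toReal := by
  set μ := gaussianMeasure n with hμ
  have hE : ExpInt μ (fun _ => 1) := ExpInt.one
  have hL1 : 0 ≤ L 1 := by simpa using h0 1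
  have hbound : ∀ p, |L p| ≤ Real.sqrt (L 1) * ‖polyLp μ hE p‖ := by
    intro p
    have hq : ∀ t : ℝ, 0 ≤ L 1 * (t * t) + (2 * L p) * t + L (p ^ 2) := by
      intro t
      have := h0 (p + t • 1)
      have he : (p + t • (1 : MvPolynomial (Fin n) ℝ)) ^ 2
          = p ^ 2 + (2 * t) • p + (t * t) • 1 := by
        simp only [smul_eq_C_mul, C_mul, map_ofNat]
        ring
      rw [he, map_add, map_add, map_smul, map_smul, smul_eq_mul, smul_eq_mul] at this
      linarith
    have hd := discrim_le_zero hq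
    unfold discrim at hd
    have h2 := h1 p
    have h3 : ∫ x, eval x (p ^ 2) ∂μ = ‖polyLp μ hE p‖ ^ 2 := by
      rw [polyLp_norm]
      simp only [map_pow]
    rw [h3] at h2
    refine abs_le_of_sq_le_sq ?_ (by positivity)
    rw [mul_pow, Real.sq_sqrt hL1]
    nlinarith [mul_le_mul_of_nonneg_left h2 hL1]
  obtain ⟨h, hmem, hrep⟩ := exists_density hE L _ hbound
  have hh : ExpInt μ h := ExpInt.of_memLp hE hmem
  have hsq : ∀ (k : (Fin n → ℝ) → ℝ) (p : MvPolynomial (Fin n) ℝ),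
      (fun x => k x * eval x p ^ 2) = fun x => k x * eval x (p ^ 2) := by
    intro k p
    ext x
    rw [map_pow]
  have hA : ∀ᵐ x ∂μ, 0 ≤ h x := by
    refine nonneg_of_squares hh fun p => ?_
    rw [hsq h p, ← hrep]
    exact h0 p
  have hB : ∀ᵐ x ∂μ, 0 ≤ 1 - h x := by
    refine nonneg_of_squares (hE.sub hh) fun p => ?_
    have e : (fun x => (1 - h x) * eval x p ^ 2)
        = fun x => eval x (p ^ 2) - h x * eval x (p ^ 2) := by
      ext x
      rw [map_pow]
      ring
    rw [e, integral_sub (hE.poly_integrable _) (hh.mul_poly _).integrable, ← hrep]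
    linarith [h1 p]
  have hC : ∀ᵐ x ∂μ, ∀ j, 0 ≤ h x * eval x (g j) := by
    rw [ae_all_iff]
    intro j
    refine nonneg_of_squares (hh.mul_poly (g j)) fun p => ?_
    have e : (fun x => h x * eval x (g j) * eval x p ^ 2)
        = fun x => h x * eval x (g j * p ^ 2) := by
      ext x
      rw [map_mul, map_pow]
      ring
    rw [e, ← hrep]
    exact hg j p
  have hΩ : MeasurableSet (semialg g) := (semialg_closed g).measurableSet
  have hfin : L 1 ≤ ∫ x, (semialg g).indicator (fun _ => (1 : ℝ)) x ∂μ := by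
    rw [hrep 1]
    refine integral_mono_ae (hh.mul_poly 1).integrable ((integrable_const 1).indicator hΩ) ?_
    filter_upwards [hA, hB, hC] with x ha hb hc
    rw [map_one, mul_one]
    by_cases hx : x ∈ semialg g
    · rw [Set.indicator_of_mem hx]; linarith
    · rw [Set.indicator_of_notMem hx]
      by_contra hpos
      push Not at hpos
      exact hx fun j => nonneg_of_mul_nonneg_right (hc j) hpos
  exact hfin.trans_eq (integral_indicator_one (μ := μ) hΩ)

/-- the dual feasible values -/
def dualSet {n m : ℕ} (g : Fin m → MvPolynomial (Fin n) ℝ) (f : MvPolynomial (Fin n) ℝ)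
    (d : ℕ) : Set ℝ :=
  {r : ℝ | ∃ p q : MvPolynomial (Fin n) ℝ,
        IsSOS d p ∧ p.totalDegree ≤ 2 * d ∧
        q ∈ Submodule.span ℝ {h : MvPolynomial (Fin n) ℝ | ∃ (i : Fin n) (β : Fin n →₀ ℕ),
          (pStokesG f i β).totalDegree ≤ 2 * d ∧ h = pStokesG f i β} ∧
        InQM g d (p + q - 1) ∧ r = ∫ x, eval x p ∂gaussianMeasure n}

theorem stokes_span_zero {n : ℕ} (f : MvPolynomial (Fin n) ℝ) (d : ℕ)
    (L : MvPolynomial (Fin n) ℝ →ₗ[ℝ] ℝ)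
    (hL : ∀ (i : Fin n) (α : Fin n →₀ ℕ), (pStokesG f i α).totalDegree ≤ 2 * d →
      L (pStokesG f i α) = 0) {q : MvPolynomial (Fin n) ℝ}
    (hq : q ∈ Submodule.span ℝ {h : MvPolynomial (Fin n) ℝ | ∃ (i : Fin n) (β : Fin n →₀ ℕ),
          (pStokesG f i β).totalDegree ≤ 2 * d ∧ h = pStokesG f i β}) : L q = 0 := by
  have : Submodule.span ℝ {h : MvPolynomial (Fin n) ℝ | ∃ (i : Fin n) (β : Fin n →₀ ℕ),
          (pStokesG f i β).totalDegree ≤ 2 * d ∧ h = pStokesG f i β} ≤ LinearMap.ker L := by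
    refine Submodule.span_le.2 ?_
    rintro _ ⟨i, β, hd, rfl⟩
    exact hL i β hd
  exact this hq

theorem stokes_span_degree {n : ℕ} (f : MvPolynomial (Fin n) ℝ) (d : ℕ)
    {q : MvPolynomial (Fin n) ℝ}
    (hq : q ∈ Submodule.span ℝ {h : MvPolynomial (Fin n) ℝ | ∃ (i : Fin n) (β : Fin n →₀ ℕ),
          (pStokesG f i β).totalDegree ≤ 2 * d ∧ h = pStokesG f i β}) :
    q.totalDegree ≤ 2 * d := by
  have : Submodule.span ℝ {h : MvPolynomial (Fin n) ℝ | ∃ (i : Fin n) (β : Fin n →₀ ℕ),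
          (pStokesG f i β).totalDegree ≤ 2 * d ∧ h = pStokesG f i β} ≤
      restrictTotalDegree (Fin n) ℝ (2 * d) := by
    refine Submodule.span_le.2 ?_
    rintro _ ⟨i, β, hd, rfl⟩
    exact (mem_restrictTotalDegree _ _ _).2 hd
  exact (mem_restrictTotalDegree _ _ _).1 (this hq)

theorem feasible_sum {n m : ℕ} {g : Fin m → MvPolynomial (Fin n) ℝ} {d : ℕ}
    {u v : (Fin n →₀ ℕ) → ℝ} (h : Feasible g d u v) {p : MvPolynomial (Fin n) ℝ}
    (hp : p.totalDegree ≤ 2 * d) :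
    rieszL u p + rieszL v p = ∫ x, eval x p ∂gaussianMeasure n := by
  rw [← polyInt_apply _ ExpInt.one, linear_eq_sum (rieszL u), linear_eq_sum (rieszL v),
    linear_eq_sum (polyInt _ _), ← Finset.sum_add_distrib]
  refine Finset.sum_congr rfl fun α hα => ?_
  rw [rieszL_monomial, rieszL_monomial, ← gmom_eq, ← h.1 α ((fdeg_le_of_mem hα).trans hp)]
  ring

theorem weak_duality {n m : ℕ} {g : Fin m → MvPolynomial (Fin n) ℝ}
    {f : MvPolynomial (Fin n) ℝ} {d : ℕ} {u v : (Fin n →₀ ℕ) → ℝ} (h : FeasibleS g f d u v)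
    {r : ℝ} (hr : r ∈ dualSet g f d) : u 0 ≤ r := by
  obtain ⟨p, q, hp, hpd, hq, hQ, rfl⟩ := hr
  have h1 := hQ.nonneg (rieszL u) (fun s hs => by rw [← riesz_eq]; exact h.1.2.1 s hs)
    (fun j s hs => by rw [← riesz_eq]; exact h.1.2.2.2 j s hs)
  have h2 := stokes_span_zero f d (rieszL u)
    (fun i α hd => by rw [← riesz_eq]; exact h.2 i α hd) hq
  have h3 := feasible_sum h.1 hpd
  have h4 := hp.nonneg (rieszL v) (fun s hs => by rw [← riesz_eq]; exact h.1.2.2.1 s hs)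
  have h5 : rieszL u 1 = u 0 := by rw [← riesz_eq, riesz_one]
  rw [map_sub, map_add, h2, h5] at h1
  linarith

theorem sos_int_nonneg {n d : ℕ} {p : MvPolynomial (Fin n) ℝ} (hp : IsSOS d p) :
    0 ≤ polyInt (gaussianMeasure n) ExpInt.one p :=
  hp.nonneg _ fun q _ => by
    rw [polyInt_apply]
    refine integral_nonneg fun x => ?_
    rw [map_pow]
    exact sq_nonneg _

theorem strong_duality {n m : ℕ} (g : Fin m → MvPolynomial (Fin n) ℝ)
    (f : MvPolynomial (Fin n) ℝ) (d : ℕ) (hd : ∀ j, dHalf (g j) ≤ d) :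
    ∃ u v, FeasibleS g f d u v ∧ u 0 = sInf (dualSet g f d) := by
  set S := Submodule.span ℝ {h : MvPolynomial (Fin n) ℝ | ∃ (i : Fin n) (β : Fin n →₀ ℕ),
          (pStokesG f i β).totalDegree ≤ 2 * d ∧ h = pStokesG f i β} with hS
  set T : Set (MvPolynomial (Fin n) ℝ) := {h | ∃ t q, InQM g d t ∧ q ∈ S ∧
    ∀ α, fdeg α ≤ 2 * d → coeff α h = coeff α (t - q)} with hT
  have hTQ : ∀ t, InQM g d t → t ∈ T := fun t ht => ⟨t, 0, ht, S.zero_mem, by simp⟩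
  set I := polyInt (gaussianMeasure n) ExpInt.one with hI
  obtain ⟨L, hLP, hLT, hL1⟩ := conic_duality {p | IsSOS d p} T 1 I (IsSOS.zero d)
    (fun a ha b hb => IsSOS.add ha hb) (fun c hc a ha => IsSOS.smul hc.le ha)
    (hTQ 0 (InQM.zero g d))
    (by
      rintro a ⟨t, q, ht, hq, h⟩ b ⟨t', q', ht', hq', h'⟩
      refine ⟨t + t', q + q', ht.add ht', S.add_mem hq hq', fun α hα => ?_⟩
      rw [coeff_add, h α hα, h' α hα, ← coeff_add]
      congr 1
      ring)
    (by
      rintro c hc a ⟨t, q, ht, hq, h⟩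
      refine ⟨c • t, c • q, ht.smul hc.le, S.smul_mem c hq, fun α hα => ?_⟩
      rw [coeff_smul, h α hα, ← coeff_smul, smul_sub])
    (fun a ha => sos_int_nonneg ha)
    (by
      intro h
      have hdec : ∃ p s, IsSOS d p ∧ IsSOS d s ∧
          ∀ α, fdeg α ≤ 2 * d → coeff α (p - h) = coeff α s := by
        induction h using MvPolynomial.monomial_add_induction_on with
        | C a =>
          exact ⟨(C ((a + 1) / 2)) ^ 2, (C ((a - 1) / 2)) ^ 2, IsSOS.sq (by simp),
            IsSOS.sq (by simp), fun α _ => by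
              congr 1
              rw [← C_pow, ← C_pow, ← C_sub]
              congr 1
              ring⟩
        | monomial_add α c h _ _ ih =>
          obtain ⟨p, s, hp, hs, hps⟩ := ih
          by_cases hα : fdeg α ≤ 2 * d
          · obtain ⟨b, b', rfl, hb, hb'⟩ := fdeg_split d α hα
            have hdeg : ∀ (e : Fin n →₀ ℕ) (a : ℝ), fdeg e ≤ d →
                (monomial e a : MvPolynomial (Fin n) ℝ).totalDegree ≤ d :=
              fun e a he => (totalDegree_monomial_le _ _).trans he
            refine ⟨p + (monomial b (1 / 2) + monomial b' (c / 2)) ^ 2,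
              s + (monomial b (1 / 2) - monomial b' (c / 2)) ^ 2,
              hp.add (IsSOS.sq ?_), hs.add (IsSOS.sq ?_), fun β hβ => ?_⟩
            · exact (totalDegree_add _ _).trans (max_le (hdeg _ _ hb) (hdeg _ _ hb'))
            · exact (totalDegree_sub _ _).trans (max_le (hdeg _ _ hb) (hdeg _ _ hb'))
            · have e1 : (monomial (b + b') c : MvPolynomial (Fin n) ℝ)
                  = 4 * (monomial b (1 / 2) * monomial b' (c / 2)) := by
                rw [monomial_mul, ← map_ofNat (C : ℝ →+* MvPolynomial (Fin n) ℝ),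
                  C_mul_monomial]
                congr 1
                ring
              rw [coeff_add, ← hps β hβ, ← coeff_add, e1]
              congr 1
              ring
          · refine ⟨p, s, hp, hs, fun β hβ => ?_⟩
            have hne : α ≠ β := by rintro rfl; exact hα hβ
            rw [← hps β hβ, coeff_sub, coeff_sub, coeff_add, coeff_monomial, if_neg hne, zero_add]
      obtain ⟨p, s, hp, hs, hps⟩ := hdec
      exact ⟨p, hp, s, 0, InQM.of_sos g hs, S.zero_mem, by simpa using hps⟩)
  have hsq : ∀ p : MvPolynomial (Fin n) ℝ, p.totalDegree ≤ d → 0 ≤ L (p ^ 2) := fun p hp =>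
    hLT _ (hTQ _ (InQM.of_sos g (IsSOS.sq hp)))
  refine ⟨fun α => L (monomial α 1), fun α => (I - L) (monomial α 1),
    ⟨⟨fun α _ => ?_, fun p hp => ?_, fun p hp => ?_, fun j p hp => ?_⟩, fun i α hα => ?_⟩, ?_⟩
  · simp only [gmom_eq, LinearMap.sub_apply, hI]
    ring
  · rw [riesz_linear]
    exact hsq p hp
  · rw [riesz_linear, LinearMap.sub_apply]
    exact sub_nonneg.2 (hLP _ (IsSOS.sq hp))
  · rw [riesz_linear]
    exact hLT _ (hTQ _ (InQM.of_loc g j hp))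
  · rw [riesz_linear]
    have hmem : pStokesG f i α ∈ S := Submodule.subset_span ⟨i, α, hα, rfl⟩
    have h1 := hLT (pStokesG f i α) ⟨0, -pStokesG f i α, InQM.zero g d, S.neg_mem hmem, by simp⟩
    have h2 := hLT (-pStokesG f i α) ⟨0, pStokesG f i α, InQM.zero g d, hmem, by simp⟩
    rw [map_neg] at h2
    linarith
  · change L 1 = _
    rw [hL1]
    congr 1
    ext r
    constructor
    · rintro ⟨p, hp, ⟨t, q, ht, hq, h⟩, rfl⟩
      refine ⟨p, q, hp, hp.degree, hq, ?_, rfl⟩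
      have hp' : IsSOS d p := hp
      have heq : p - 1 = t - q := by
        ext α
        by_cases hα : fdeg α ≤ 2 * d
        · exact h α hα
        · have hz : ∀ w : MvPolynomial (Fin n) ℝ, w.totalDegree ≤ 2 * d → coeff α w = 0 := by
            intro w hw
            by_contra hne
            exact hα ((fdeg_le_of_mem (mem_support_iff.2 hne)).trans hw)
          rw [hz, hz]
          · exact (totalDegree_sub _ _).trans
              (max_le (ht.degree hd) (stokes_span_degree f d hq))
          · exact (totalDegree_sub _ _).trans (max_le hp'.degree (by simp))
      have : p + q - 1 = t := by
        rw [add_sub_right_comm, heq]; ring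
      rwa [this]
    · rintro ⟨p, q, hp, -, hq, hQ, rfl⟩
      refine ⟨p, hp, ⟨p + q - 1, q, hQ, hq, fun α _ => ?_⟩, rfl⟩
      congr 1
      ring

theorem dualSet_bddBelow {n m : ℕ} (g : Fin m → MvPolynomial (Fin n) ℝ)
    (f : MvPolynomial (Fin n) ℝ) (d : ℕ) : BddBelow (dualSet g f d) := by
  refine ⟨0, ?_⟩
  rintro r ⟨p, q, hp, -, -, -, rfl⟩
  exact sos_int_nonneg hp

theorem dualSet_nonempty {n m : ℕ} (g : Fin m → MvPolynomial (Fin n) ℝ)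
    (f : MvPolynomial (Fin n) ℝ) (d : ℕ) : (dualSet g f d).Nonempty := by
  have h : IsSOS d (1 : MvPolynomial (Fin n) ℝ) := by
    simpa using IsSOS.sq (d := d) (p := (1 : MvPolynomial (Fin n) ℝ)) (by simp)
  exact ⟨_, 1, 0, h, h.degree, Submodule.zero_mem _, by simpa using InQM.zero g d, rfl⟩

theorem main_greatest {n m : ℕ} (g : Fin m → MvPolynomial (Fin n) ℝ)
    (f : MvPolynomial (Fin n) ℝ) (d : ℕ) (hd : ∀ j, dHalf (g j) ≤ d) :
    IsGreatest {r : ℝ | ∃ u v, FeasibleS g f d u v ∧ r = u 0} (sInf (dualSet g f d)) := by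
  obtain ⟨u, v, huv, hu⟩ := strong_duality g f d hd
  refine ⟨⟨u, v, huv, hu.symm⟩, ?_⟩
  rintro r ⟨u', v', h', rfl⟩
  exact le_csInf (dualSet_nonempty g f d) fun r hr => weak_duality h' hr

theorem omegabar_eq {n m : ℕ} (g : Fin m → MvPolynomial (Fin n) ℝ)
    (f : MvPolynomial (Fin n) ℝ) (d : ℕ) (hd : ∀ j, dHalf (g j) ≤ d) :
    omegabar g f d = sInf (dualSet g f d) := (main_greatest g f d hd).csSup_eq

/-- the restriction of the Gaussian measure to `Ω` is feasible -/
theorem measure_feasible {n m : ℕ} (g : Fin m → MvPolynomial (Fin n) ℝ)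
    (f : MvPolynomial (Fin n) ℝ)
    (hfb : ∀ x ∈ frontier (semialg g), eval x f = 0) (d : ℕ) :
    ∃ u v, FeasibleS g f d u v ∧ u 0 = (gaussianMeasure n (semialg g)).toReal := by
  have hm : MeasurableSet (semialg g) := (semialg_closed g).measurableSet
  have h1 : ExpInt ((gaussianMeasure n).restrict (semialg g)) (fun _ => 1) :=
    ExpInt.one.mono Measure.restrict_le_self
  have h2 : ExpInt ((gaussianMeasure n).restrict (semialg g)ᶜ) (fun _ => 1) :=
    ExpInt.one.mono Measure.restrict_le_self
  refine ⟨fun α => polyInt _ h1 (monomial α 1), fun α => polyInt _ h2 (monomial α 1),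
    ⟨⟨fun α _ => ?_, fun p _ => ?_, fun p _ => ?_, fun j p _ => ?_⟩, fun i α _ => ?_⟩, ?_⟩
  · simp only [gmom_eq, polyInt_apply]
    exact integral_add_compl hm (ExpInt.one.poly_integrable _)
  · rw [riesz_linear, polyInt_apply]
    exact integral_nonneg fun x => by rw [map_pow]; exact sq_nonneg _
  · rw [riesz_linear, polyInt_apply]
    exact integral_nonneg fun x => by rw [map_pow]; exact sq_nonneg _
  · rw [riesz_linear, polyInt_apply]
    refine setIntegral_nonneg hm fun x hx => ?_
    rw [map_mul, map_pow]
    exact mul_nonneg (hx j) (sq_nonneg _)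
  · rw [riesz_linear, polyInt_apply]
    exact stokes g f hfb i α
  · change polyInt _ h1 1 = _
    rw [polyInt_apply]
    simp [Measure.real]

theorem limit_bound {n m : ℕ} (g : Fin m → MvPolynomial (Fin n) ℝ)
    (f : MvPolynomial (Fin n) ℝ) {ε : ℝ} (hε : 0 < ε) :
    ∃ d0, ∀ d, d0 ≤ d → ∃ r ∈ dualSet g f d,
      r < (gaussianMeasure n (semialg g)).toReal + ε := by
  obtain ⟨L, hLP, hLT, hL1⟩ := conic_duality {p : MvPolynomial (Fin n) ℝ | ∃ d, IsSOS d p}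
    {p : MvPolynomial (Fin n) ℝ | ∃ d, InQM g d p} 1
    (polyInt (gaussianMeasure n) ExpInt.one) ⟨0, IsSOS.zero 0⟩
    (by
      rintro a ⟨d, ha⟩ b ⟨e, hb⟩
      exact ⟨max d e, (ha.mono (le_max_left _ _)).add (hb.mono (le_max_right _ _))⟩)
    (by
      rintro c hc a ⟨d, ha⟩
      exact ⟨d, ha.smul hc.le⟩)
    ⟨0, InQM.zero g 0⟩
    (by
      rintro a ⟨d, ha⟩ b ⟨e, hb⟩
      exact ⟨max d e, (ha.mono (le_max_left _ _)).add (hb.mono (le_max_right _ _))⟩)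
    (by
      rintro c hc a ⟨d, ha⟩
      exact ⟨d, ha.smul hc.le⟩)
    (by
      rintro a ⟨d, ha⟩
      exact sos_int_nonneg ha)
    (by
      intro h
      refine ⟨(C (1 / 2) * (h + 1)) ^ 2, ⟨_, IsSOS.sq le_rfl⟩, ?_⟩
      refine ⟨(C (1 / 2) * (h - 1)).totalDegree, ?_⟩
      have e : (C (1 / 2) * (h + 1)) ^ 2 - h
          = (C (1 / 2) * (h - 1) : MvPolynomial (Fin n) ℝ) ^ 2 := by
        have hC : (C (1 / 2) : MvPolynomial (Fin n) ℝ) ^ 2 * 4 = 1 := by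
          rw [← C_pow, ← map_ofNat (C : ℝ →+* MvPolynomial (Fin n) ℝ), ← C_mul, ← C_1]
          norm_num
        linear_combination h * hC
      rw [e]
      exact InQM.of_sos g (IsSOS.sq le_rfl))
  have hb : L 1 ≤ (gaussianMeasure n (semialg g)).toReal := by
    refine functional_bound g L (fun p => ?_) (fun p => ?_) (fun j p => ?_)
    · exact hLT _ ⟨_, InQM.of_sos g (IsSOS.sq le_rfl)⟩
    · exact hLP _ ⟨_, IsSOS.sq le_rfl⟩
    · exact hLT _ ⟨p.totalDegree + dHalf (g j), InQM.of_loc g j (by omega)⟩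
  have hlt : sInf {r : ℝ | ∃ p ∈ {p : MvPolynomial (Fin n) ℝ | ∃ d, IsSOS d p},
      p - 1 ∈ {p : MvPolynomial (Fin n) ℝ | ∃ d, InQM g d p} ∧
        r = polyInt (gaussianMeasure n) ExpInt.one p} <
      (gaussianMeasure n (semialg g)).toReal + ε := by
    rw [← hL1]; linarith
  have hne : {r : ℝ | ∃ p ∈ {p : MvPolynomial (Fin n) ℝ | ∃ d, IsSOS d p},
      p - 1 ∈ {p : MvPolynomial (Fin n) ℝ | ∃ d, InQM g d p} ∧
        r = polyInt (gaussianMeasure n) ExpInt.one p}.Nonempty :=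
    ⟨_, 1, ⟨0, by simpa using IsSOS.sq (d := 0) (p := (1 : MvPolynomial (Fin n) ℝ)) (by simp)⟩,
      ⟨0, by simpa using InQM.zero g 0⟩, rfl⟩
  obtain ⟨r, ⟨p, ⟨d1, hp⟩, ⟨d2, hq⟩, rfl⟩, hr⟩ := exists_lt_of_csInf_lt hne hlt
  refine ⟨max d1 d2, fun d hd => ⟨_, ⟨p, 0, ?_, ?_, Submodule.zero_mem _, ?_, rfl⟩, hr⟩⟩
  · exact hp.mono ((le_max_left _ _).trans hd)
  · exact (hp.mono ((le_max_left _ _).trans hd)).degree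
  · rw [add_zero]
    exact hq.mono ((le_max_right _ _).trans hd)

theorem feasibleS_mono {n m : ℕ} {g : Fin m → MvPolynomial (Fin n) ℝ}
    {f : MvPolynomial (Fin n) ℝ} {d e : ℕ} (h : d ≤ e) {u v : (Fin n →₀ ℕ) → ℝ}
    (hF : FeasibleS g f e u v) : FeasibleS g f d u v := by
  obtain ⟨⟨h1, h2, h3, h4⟩, h5⟩ := hF
  exact ⟨⟨fun α hα => h1 α (by omega), fun p hp => h2 p (hp.trans h),
    fun p hp => h3 p (hp.trans h), fun j p hp => h4 j p (by omega)⟩,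
    fun i α hα => h5 i α (by omega)⟩


/-- the Stokes-augmented hierarchy. For the Gaussian measure, `Ω` and `ℝⁿ∖Ω`
with nonempty interior, and `f` vanishing on `∂Ω`: for every `d ≥ d₀` the program defining
`ω̄_d` attains its optimum and equals its semidefinite dual value; the sequence `(ω̄_d)` is
monotone non-increasing with `μ(Ω) ≤ ω̄_d ≤ ō_d(1)`, and `ω̄_d → μ(Ω)`. -/
theorem stmt17 {n m : ℕ} (g : Fin m → MvPolynomial (Fin n) ℝ)
    (hΩ : (interior (semialg g)).Nonempty)
    (hΩc : (interior ((semialg g)ᶜ)).Nonempty)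
    (f : MvPolynomial (Fin n) ℝ)
    (hfb : ∀ x ∈ frontier (semialg g), eval x f = 0)
    (d0 : ℕ) (hd0 : ∀ j, dHalf (g j) ≤ d0) :
    (∀ d, d0 ≤ d →
      IsGreatest {r : ℝ | ∃ u v, FeasibleS g f d u v ∧ r = u 0} (omegabar g f d) ∧
      omegabar g f d = sInf {r : ℝ | ∃ p q : MvPolynomial (Fin n) ℝ,
        IsSOS d p ∧ p.totalDegree ≤ 2 * d ∧
        q ∈ Submodule.span ℝ {h : MvPolynomial (Fin n) ℝ | ∃ (i : Fin n) (β : Fin n →₀ ℕ),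
          (pStokesG f i β).totalDegree ≤ 2 * d ∧ h = pStokesG f i β} ∧
        InQM g d (p + q - 1) ∧ r = ∫ x, eval x p ∂gaussianMeasure n}) ∧
    (∀ d, d0 ≤ d → omegabar g f (d + 1) ≤ omegabar g f d) ∧
    (∀ d, d0 ≤ d →
      (gaussianMeasure n (semialg g)).toReal ≤ omegabar g f d ∧
      omegabar g f d ≤ obar g d 1) ∧
    Tendsto (fun d => omegabar g f d) atTop
      (𝓝 (gaussianMeasure n (semialg g)).toReal) := by
  have hd : ∀ d, d0 ≤ d → ∀ j, dHalf (g j) ≤ d := fun d h j => (hd0 j).trans h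
  have hG : ∀ d, d0 ≤ d →
      IsGreatest {r : ℝ | ∃ u v, FeasibleS g f d u v ∧ r = u 0} (omegabar g f d) := by
    intro d h
    rw [omegabar_eq g f d (hd d h)]
    exact main_greatest g f d (hd d h)
  have hlow : ∀ d, d0 ≤ d → (gaussianMeasure n (semialg g)).toReal ≤ omegabar g f d := by
    intro d h
    obtain ⟨u, v, huv, hu⟩ := measure_feasible g f hfb d
    exact (hG d h).2 ⟨u, v, huv, hu.symm⟩
  refine ⟨fun d h => ⟨hG d h, omegabar_eq g f d (hd d h)⟩, fun d h => ?_,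
    fun d h => ⟨hlow d h, ?_⟩, ?_⟩
  · obtain ⟨u, v, huv, hu⟩ := (hG (d + 1) (by omega)).1
    exact (hG d h).2 ⟨u, v, feasibleS_mono (Nat.le_succ d) huv, hu⟩
  · obtain ⟨u, v, huv, hu⟩ := (hG d h).1
    refine le_csSup ⟨gmom n 0, ?_⟩ ⟨u, v, huv.1, by rw [riesz_one, hu]⟩
    rintro r ⟨u', v', h', rfl⟩
    have h1 := h'.1 0 (by simp [fdeg])
    have h2 := h'.2.2.1 1 (by simp)
    rw [one_pow, riesz_one] at h2
    rw [riesz_one]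
    linarith
  · rw [Metric.tendsto_atTop]
    intro ε hε
    obtain ⟨d1, hd1⟩ := limit_bound g f hε
    refine ⟨max d0 d1, fun d h => ?_⟩
    have h0 : d0 ≤ d := (le_max_left _ _).trans h
    obtain ⟨r, hr, hlt⟩ := hd1 d ((le_max_right _ _).trans h)
    have hle : omegabar g f d ≤ r := by
      rw [omegabar_eq g f d (hd d h0)]
      exact csInf_le (dualSet_bddBelow g f d) hr
    rw [Real.dist_eq, abs_of_nonneg (sub_nonneg.2 (hlow d h0))]
    linarith
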